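/- Fix m ∈ ℕ. Let (F_n) be a sequence of random variables in the finitely generated Wiener chaos of degree m, i.e. F_n = P_n(N^{(n)}) where N^{(n)} ~ γ_{K_n} for some K_n ∈ ℕ and P_n lies in the linear span of the products ∏_{i=1}^{K_n} H_{k_i}(x_i) with Σ_i k_i = m. If the laws of F_n converge weakly to the standard Gaussian distribution N(0,1), then for every q ∈ ℕ one has limsup_{n→∞} E[Γ[F_n,F_n]^{−q}] < ∞, i.e. limsup_{n→∞} ∫_{ℝ^{K_n}} ( Σ_{i=1}^{K_n} (∂_i P_n(x))² )^{−q} dγ_{K_n}(x) < ∞. -/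

import Mathlib

open MeasureTheory ProbabilityTheory MvPolynomial Filter Topology

noncomputable def gaussPi (ι : Type) [Fintype ι] : Measure (ι → ℝ) :=
  Measure.pi fun _ => gaussianReal 0 1

noncomputable def hermiteProd {K : ℕ} (k : Fin K → ℕ) : MvPolynomial (Fin K) ℝ :=
  ∏ i, Polynomial.aeval (MvPolynomial.X i) (Polynomial.hermite (k i))

noncomputable def chaos (K m : ℕ) : Submodule ℝ (MvPolynomial (Fin K) ℝ) :=
  Submodule.span ℝ {P | ∃ k : Fin K → ℕ, ∑ i, k i = m ∧ P = hermiteProd k}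

noncomputable def sqField {ι : Type} [Fintype ι] (P : MvPolynomial ι ℝ) (x : ι → ℝ) : ℝ :=
  ∑ i, (eval x (pderiv i P)) ^ 2

def TendstoInLaw {E : Type} [MeasurableSpace E] [TopologicalSpace E]
    (μs : ℕ → Measure E) (μ : Measure E) : Prop :=
  ∀ f : BoundedContinuousFunction E ℝ,
    Tendsto (fun n => ∫ x, f x ∂μs n) atTop (𝓝 (∫ x, f x ∂μ))


set_option linter.unusedSectionVars false

set_option linter.unusedSectionVars false

section Basics

lemma stein_gaussianReal {E : Type*} [NormedAddCommGroup E] [NormedSpace ℝ E]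
    (f f' : ℝ → E) (hd : ∀ s, HasDerivAt f (f' s) s)
    (hf : Integrable f (gaussianReal 0 1)) (hf' : Integrable f' (gaussianReal 0 1))
    (hxf : Integrable (fun s => s • f s) (gaussianReal 0 1)) :
    ∫ s, f' s ∂(gaussianReal 0 1) = ∫ s, s • f s ∂(gaussianReal 0 1) := by
  have key : ∀ g : ℝ → E, Integrable g (gaussianReal 0 1) →
      Integrable (fun x => gaussianPDFReal 0 1 x • g x) := by
    intro g hg
    rw [gaussianReal_of_var_ne_zero _ one_ne_zero,
      integrable_withDensity_iff_integrable_smul' (measurable_gaussianPDF _ _)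
        (ae_of_all _ fun _ => gaussianPDF_lt_top)] at hg
    simpa [gaussianPDF, gaussianPDFReal_nonneg] using hg
  have hpdf : ∀ s : ℝ, HasDerivAt (gaussianPDFReal 0 1) (-(s * gaussianPDFReal 0 1 s)) s := by
    intro s
    rw [gaussianPDFReal_def]
    have h1 : HasDerivAt (fun x : ℝ => -(x - 0) ^ 2 / (2 * ((1 : NNReal) : ℝ))) (-s) s := by
      have := ((hasDerivAt_id s).pow 2).neg.div_const 2
      simp only [id, sub_zero, NNReal.coe_one, mul_one] at this ⊢
      convert! this using 1
      simp
      ring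
    have := (h1.exp).const_mul ((√(2 * Real.pi * ((1 : NNReal) : ℝ)))⁻¹)
    convert! this using 1
    ring
  have h0 := integral_eq_zero_of_hasDerivAt_of_integrable
    (f := fun s => gaussianPDFReal 0 1 s • f s)
    (f' := fun s => gaussianPDFReal 0 1 s • f' s - gaussianPDFReal 0 1 s • (s • f s))
    (fun s => by
      have := (hpdf s).smul (hd s)
      convert! this using 1
      rw [sub_eq_add_neg, neg_smul, smul_smul, mul_comm s])
    ((key _ hf').sub (key _ hxf)) (key _ hf)
  rw [integral_sub (key _ hf') (key _ hxf)] at h0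
  rw [integral_gaussianReal_eq_integral_smul one_ne_zero,
    integral_gaussianReal_eq_integral_smul one_ne_zero]
  exact sub_eq_zero.mp h0

variable {ι : Type} [Fintype ι]

instance : IsProbabilityMeasure (gaussPi ι) := by unfold gaussPi; infer_instance

lemma measurePreserving_update [DecidableEq ι] (i : ι) :
    MeasurePreserving (fun z : (ι → ℝ) × ℝ => Function.update z.1 i z.2)
      ((gaussPi ι).prod (gaussianReal 0 1)) (gaussPi ι) := by
  have hm : Measurable (fun z : (ι → ℝ) × ℝ => Function.update z.1 i z.2) := by
    rw [measurable_pi_iff]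
    intro j
    by_cases h : j = i
    · subst h; simpa using measurable_snd
    · simp only [Function.update_of_ne h]; fun_prop
  refine ⟨hm, ?_⟩
  symm
  unfold gaussPi
  refine Measure.pi_eq ?_
  intro s hs
  rw [Measure.map_apply hm (MeasurableSet.univ_pi hs)]
  have : (fun z : (ι → ℝ) × ℝ => Function.update z.1 i z.2) ⁻¹' (Set.univ.pi s) =
      (Set.univ.pi (Function.update s i Set.univ)) ×ˢ (s i) := by
    ext ⟨x, t⟩
    simp only [Set.mem_preimage, Set.mem_pi, Set.mem_univ, true_implies, Set.mem_prod]
    constructor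
    · intro h
      refine ⟨fun j => ?_, by simpa using h i⟩
      by_cases hj : j = i
      · subst hj; simp
      · simpa [Function.update_of_ne hj] using h j
    · rintro ⟨h1, h2⟩ j
      by_cases hj : j = i
      · subst hj; simpa using h2
      · simpa [Function.update_of_ne hj] using h1 j
  rw [this, Measure.prod_prod, Measure.pi_pi]
  rw [← Finset.mul_prod_erase _ _ (Finset.mem_univ i),
    ← Finset.mul_prod_erase Finset.univ (fun j => gaussianReal 0 1 (s j)) (Finset.mem_univ i)]
  simp only [Function.update_self, measure_univ, one_mul]
  rw [mul_comm]
  congr 1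
  refine Finset.prod_congr rfl fun j hj => ?_
  rw [Function.update_of_ne (Finset.ne_of_mem_erase hj)]

lemma ibp_gen [DecidableEq ι] {E : Type*} [NormedAddCommGroup E] [NormedSpace ℝ E]
    (i : ι) (f f' : (ι → ℝ) → E)
    (hd : ∀ x s, HasDerivAt (fun s => f (Function.update x i s)) (f' (Function.update x i s)) s)
    (hf : Integrable f (gaussPi ι)) (hf' : Integrable f' (gaussPi ι))
    (hxf : Integrable (fun x => x i • f x) (gaussPi ι)) :
    ∫ x, f' x ∂(gaussPi ι) = ∫ x, x i • f x ∂(gaussPi ι) := by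
  have mp := measurePreserving_update (ι := ι) i
  have int : ∀ g : (ι → ℝ) → E, Integrable g (gaussPi ι) →
      Integrable (fun z : (ι → ℝ) × ℝ => g (Function.update z.1 i z.2))
        ((gaussPi ι).prod (gaussianReal 0 1)) :=
    fun g hg => mp.integrable_comp_of_integrable hg
  have fub : ∀ g : (ι → ℝ) → E, Integrable g (gaussPi ι) → ∫ x, g x ∂(gaussPi ι) =
      ∫ x, ∫ s, g (Function.update x i s) ∂(gaussianReal 0 1) ∂(gaussPi ι) := by
    intro g hg
    have h1 : ∫ x, g x ∂(gaussPi ι) = ∫ z : (ι → ℝ) × ℝ, g (Function.update z.1 i z.2)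
        ∂((gaussPi ι).prod (gaussianReal 0 1)) := by
      conv_lhs => rw [← mp.map_eq]
      rw [integral_map mp.measurable.aemeasurable]
      rw [mp.map_eq]; exact hg.aestronglyMeasurable
    rw [h1, integral_prod _ (int g hg)]
  rw [fub _ hf', fub _ hxf]
  refine integral_congr_ae ?_
  filter_upwards [(int _ hf).prod_right_ae, (int _ hf').prod_right_ae,
    (int _ hxf).prod_right_ae] with x h1 h2 h3
  simp only [Function.update_self] at h3 ⊢
  exact stein_gaussianReal _ _ (hd x) h1 h2 h3

lemma integrable_evalP (P : MvPolynomial ι ℝ) :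
    Integrable (fun x => eval x P) (gaussPi ι) := by
  induction P using MvPolynomial.induction_on' with
  | monomial s a =>
    simp only [eval_monomial]
    refine Integrable.const_mul ?_ a
    have : (fun x : ι → ℝ => s.prod fun n e => x n ^ e) = fun x => ∏ i, x i ^ (s i) := by
      funext x
      exact Finsupp.prod_fintype _ _ (by simp)
    rw [this]
    unfold gaussPi
    refine Integrable.fintype_prod (f := fun i t => t ^ (s i)) fun i => ?_
    rcases Nat.eq_zero_or_pos (s i) with h | h
    · simp [h]
    · have := (memLp_id_gaussianReal (μ := 0) (v := 1) (s i)).integrable_norm_pow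
        (by omega)
      refine this.mono (by fun_prop) ?_
      exact ae_of_all _ fun x => by simp
  | add p q hp hq => simp only [map_add]; exact hp.add hq

lemma continuous_evalP (P : MvPolynomial ι ℝ) : Continuous (fun x => eval x P) :=
  MvPolynomial.continuous_eval P

lemma hasDerivAt_eval_update [DecidableEq ι] (P : MvPolynomial ι ℝ) (x : ι → ℝ) (i : ι) (s : ℝ) :
    HasDerivAt (fun s => eval (Function.update x i s) P)
      (eval (Function.update x i s) (pderiv i P)) s := by
  induction P using MvPolynomial.induction_on with
  | C a => simpa using hasDerivAt_const s a
  | add p q hp hq => simp only [map_add]; exact hp.add hq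
  | mul_X p j hp =>
    have h2 : HasDerivAt (fun s => (Function.update x i s) j)
        (eval (Function.update x i s) (pderiv i (X j : MvPolynomial ι ℝ))) s := by
      by_cases h : j = i
      · subst h; simp only [Function.update_self, pderiv_X_self, map_one]; exact hasDerivAt_id' s
      · rw [pderiv_X_of_ne h]
        simpa [Function.update_of_ne h] using hasDerivAt_const s (x j)
    have := hp.mul h2
    simp only [map_mul, eval_X, Derivation.leibniz, smul_eq_mul, map_add]
    convert! this using 1
    ring

/-- Gaussian expectation of a polynomial. -/
noncomputable def EE (P : MvPolynomial ι ℝ) : ℝ := ∫ x, eval x P ∂(gaussPi ι)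

lemma EE_add (P Q : MvPolynomial ι ℝ) : EE (P + Q) = EE P + EE Q := by
  simp only [EE, map_add]; exact integral_add (integrable_evalP P) (integrable_evalP Q)
lemma EE_sub (P Q : MvPolynomial ι ℝ) : EE (P - Q) = EE P - EE Q := by
  simp only [EE, map_sub]; exact integral_sub (integrable_evalP P) (integrable_evalP Q)
lemma EE_neg (P : MvPolynomial ι ℝ) : EE (-P) = - EE P := by
  simp only [EE, map_neg]; exact integral_neg _
lemma EE_zero : EE (0 : MvPolynomial ι ℝ) = 0 := by simp [EE]
lemma EE_C (a : ℝ) : EE (C a : MvPolynomial ι ℝ) = a := by simp [EE]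
lemma EE_one : EE (1 : MvPolynomial ι ℝ) = 1 := by simp [EE]
lemma EE_C_mul (a : ℝ) (P : MvPolynomial ι ℝ) : EE (C a * P) = a * EE P := by
  simp only [EE, map_mul, eval_C]; exact integral_const_mul _ _
lemma EE_sum {κ : Type*} (s : Finset κ) (f : κ → MvPolynomial ι ℝ) :
    EE (∑ k ∈ s, f k) = ∑ k ∈ s, EE (f k) := by
  simp only [EE, map_sum]; exact integral_finsetSum _ fun k _ => integrable_evalP (f k)
lemma EE_nonneg (P : MvPolynomial ι ℝ) (h : ∀ x, 0 ≤ eval x P) : 0 ≤ EE P :=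
  integral_nonneg h
lemma EE_sq_nonneg (P : MvPolynomial ι ℝ) : 0 ≤ EE (P ^ 2) :=
  EE_nonneg _ fun x => by simpa using sq_nonneg _
lemma EE_mono (P Q : MvPolynomial ι ℝ) (h : ∀ x, eval x P ≤ eval x Q) : EE P ≤ EE Q :=
  integral_mono (integrable_evalP P) (integrable_evalP Q) h

lemma EE_cauchy (P Q : MvPolynomial ι ℝ) : EE (P * Q) ^ 2 ≤ EE (P ^ 2) * EE (Q ^ 2) := by
  have h : ∀ t : ℝ, 0 ≤ EE (Q ^ 2) * (t * t) + (2 * EE (P * Q)) * t + EE (P ^ 2) := by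
    intro t
    have := EE_sq_nonneg (P + C t * Q)
    have e : (P + C t * Q) ^ 2 = P ^ 2 + (C (2 * t) * (P * Q) + C (t * t) * Q ^ 2) := by
      simp only [map_mul, map_ofNat]; ring
    rw [e, EE_add, EE_add, EE_C_mul, EE_C_mul] at this
    linarith
  have := discrim_le_zero h
  unfold discrim at this
  nlinarith

lemma EE_ibp (i : ι) (P : MvPolynomial ι ℝ) : EE (pderiv i P) = EE (X i * P) := by
  classical
  have := ibp_gen i (fun x => eval x P) (fun x => eval x (pderiv i P))
    (fun x s => hasDerivAt_eval_update P x i s) (integrable_evalP P) (integrable_evalP _)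
    (by have := integrable_evalP (X i * P); simp only [map_mul, eval_X] at this; exact this)
  simpa [EE] using this

/-- Polynomial carré du champ. -/
noncomputable def Gam (P Q : MvPolynomial ι ℝ) : MvPolynomial ι ℝ :=
  ∑ i, pderiv i P * pderiv i Q

/-- Ornstein-Uhlenbeck operator on polynomials. -/
noncomputable def Lop (P : MvPolynomial ι ℝ) : MvPolynomial ι ℝ :=
  ∑ i, (pderiv i (pderiv i P) - X i * pderiv i P)

lemma Gam_comm (P Q : MvPolynomial ι ℝ) : Gam P Q = Gam Q P := by
  simp [Gam, mul_comm]
lemma Gam_mul (P Q R : MvPolynomial ι ℝ) : Gam P (Q * R) = Q * Gam P R + R * Gam P Q := by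
  simp only [Gam, Derivation.leibniz, smul_eq_mul, Finset.mul_sum, ← Finset.sum_add_distrib]
  refine Finset.sum_congr rfl fun i _ => by ring
lemma Gam_C (P : MvPolynomial ι ℝ) (a : ℝ) : Gam P (C a) = 0 := by simp [Gam]
lemma Gam_add (P Q R : MvPolynomial ι ℝ) : Gam P (Q + R) = Gam P Q + Gam P R := by
  simp [Gam, mul_add, Finset.sum_add_distrib]
lemma Lop_add (P Q : MvPolynomial ι ℝ) : Lop (P + Q) = Lop P + Lop Q := by
  simp only [Lop, map_add, ← Finset.sum_add_distrib]
  refine Finset.sum_congr rfl fun i _ => by ring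
lemma Lop_C_mul (a : ℝ) (Q : MvPolynomial ι ℝ) : Lop (C a * Q) = C a * Lop Q := by
  simp only [Lop, pderiv_C_mul, Finset.mul_sum]
  refine Finset.sum_congr rfl fun i _ => by ring
lemma Lop_zero : Lop (0 : MvPolynomial ι ℝ) = 0 := by simp [Lop]
lemma Lop_C (a : ℝ) : Lop (C a : MvPolynomial ι ℝ) = 0 := by simp [Lop]
lemma Lop_sum {κ : Type*} (s : Finset κ) (f : κ → MvPolynomial ι ℝ) :
    Lop (∑ k ∈ s, f k) = ∑ k ∈ s, Lop (f k) := by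
  classical
  induction s using Finset.induction_on with
  | empty => simp [Lop_zero]
  | insert a s ha ih => rw [Finset.sum_insert ha, Finset.sum_insert ha, Lop_add, ih]

lemma Lop_mul (P Q : MvPolynomial ι ℝ) :
    Lop (P * Q) = P * Lop Q + Q * Lop P + 2 * Gam P Q := by
  simp only [Lop, Gam, Derivation.leibniz, smul_eq_mul, Finset.mul_sum, ← Finset.sum_add_distrib,
    map_add]
  refine Finset.sum_congr rfl fun i _ => by ring

lemma EE_Gam (P Q : MvPolynomial ι ℝ) : EE (Gam P Q) = - EE (P * Lop Q) := by
  have : Gam P Q + P * Lop Q = ∑ i, (pderiv i (P * pderiv i Q) - X i * (P * pderiv i Q)) := by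
    simp only [Lop, Gam, Derivation.leibniz, smul_eq_mul, Finset.mul_sum,
      ← Finset.sum_add_distrib]
    refine Finset.sum_congr rfl fun i _ => by ring
  have h2 : EE (Gam P Q + P * Lop Q) = 0 := by
    rw [this, EE_sum]
    exact Finset.sum_eq_zero fun i _ => by rw [EE_sub, EE_ibp]; ring
  rw [EE_add] at h2
  linarith

lemma pderiv_comm' (i j : ι) (P : MvPolynomial ι ℝ) :
    pderiv i (pderiv j P) = pderiv j (pderiv i P) := by
  classical
  have := Derivation.commutator_apply (D1 := MvPolynomial.pderiv (R := ℝ) i) (D2 := pderiv j) P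
  have h0 : ⁅(pderiv i : Derivation ℝ (MvPolynomial ι ℝ) (MvPolynomial ι ℝ)),
      (pderiv j : Derivation ℝ (MvPolynomial ι ℝ) (MvPolynomial ι ℝ))⁆ = 0 := by
    apply MvPolynomial.derivation_ext
    intro k
    rw [Derivation.commutator_apply]
    simp only [pderiv_X, Pi.single_apply]
    split_ifs <;> simp
  rw [h0] at this
  exact sub_eq_zero.mp this.symm

lemma pderiv_Lop (j : ι) (P : MvPolynomial ι ℝ) :
    pderiv j (Lop P) = Lop (pderiv j P) - pderiv j P := by
  classical
  simp only [Lop, map_sum, map_sub, Derivation.leibniz, smul_eq_mul, pderiv_X]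
  have : ∀ i, (pderiv j) ((pderiv i) ((pderiv i) P)) -
      (X i * (pderiv j) ((pderiv i) P) + (pderiv i) P * (Pi.single j 1 : ι → MvPolynomial ι ℝ) i) =
      ((pderiv i) ((pderiv i) ((pderiv j) P)) - X i * (pderiv i) ((pderiv j) P)) -
      (if i = j then pderiv i P else 0) := by
    intro i
    rw [pderiv_comm' j i, pderiv_comm' j i]
    by_cases h : i = j
    · subst h; simp; ring
    · simp [h]
  rw [Finset.sum_congr rfl fun i _ => this i, Finset.sum_sub_distrib]
  simp

lemma bochner (P : MvPolynomial ι ℝ) :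
    EE (Lop P ^ 2) = EE (Gam P P) + ∑ j, EE (Gam (pderiv j P) (pderiv j P)) := by
  have h1 : EE (Lop P ^ 2) = - EE (Gam (Lop P) P) := by rw [EE_Gam, neg_neg, sq]
  have h2 : Gam (Lop P) P = ∑ j, (pderiv j P * Lop (pderiv j P)) - Gam P P := by
    simp only [Gam, pderiv_Lop, ← Finset.sum_sub_distrib]
    refine Finset.sum_congr rfl fun i _ => by ring
  rw [h1, h2, EE_sub, EE_sum]
  simp only [EE_Gam (pderiv _ P)]
  rw [Finset.sum_neg_distrib]; ring

lemma totalDegree_pderiv_le (i : ι) (P : MvPolynomial ι ℝ) (D : ℕ) (h : P.totalDegree ≤ D) :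
    (pderiv i P).totalDegree ≤ D - 1 := by
  classical
  rw [P.as_sum, map_sum]
  refine (totalDegree_finsetSum _ _).trans (Finset.sup_le fun s hs => ?_)
  rw [pderiv_monomial]
  by_cases h0 : s i = 0
  · simp [h0]
  have h1 : (s.sum fun _ e => e) ≤ D := (le_totalDegree hs).trans h
  refine (totalDegree_monomial_le _ _).trans ?_
  have h2 : s = (s - Finsupp.single i 1) + Finsupp.single i 1 := by
    rw [tsub_add_cancel_of_le]
    simpa using Nat.one_le_iff_ne_zero.mpr h0
  have h3 : (s.sum fun _ e => e) = ((s - Finsupp.single i 1).sum fun _ e => e) + 1 := by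
    conv_lhs => rw [h2]
    rw [Finsupp.sum_add_index' (by simp) (by simp)]
    simp
  have h4 : ((s - Finsupp.single i 1).sum fun _ e => e) ≤ D - 1 := by omega
  exact h4

lemma pderiv_eq_zero_of_deg (i : ι) (P : MvPolynomial ι ℝ) (h : P.totalDegree ≤ 0) :
    pderiv i P = 0 := by
  rw [totalDegree_eq_zero_iff_eq_C.mp (Nat.le_zero.mp h)]; simp

lemma EE_Gam_nonneg (P : MvPolynomial ι ℝ) : 0 ≤ EE (Gam P P) :=
  EE_nonneg _ fun x => by
    simp only [Gam, map_sum, map_mul]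
    exact Finset.sum_nonneg fun i _ => mul_self_nonneg _

/-- Spectral bounds for polynomials of bounded degree. -/
lemma spectral (D : ℕ) : ∀ P : MvPolynomial ι ℝ, P.totalDegree ≤ D →
    EE (Lop P ^ 2) ≤ D * EE (Gam P P) ∧ EE (Gam P P) ≤ D * EE (P ^ 2) := by
  induction D with
  | zero =>
    intro P hP
    have : ∀ i, pderiv i P = 0 := fun i => pderiv_eq_zero_of_deg i P hP
    simp [Lop, Gam, this, EE_zero]
  | succ D ih =>
    intro P hP
    have h1 : EE (Lop P ^ 2) ≤ (D + 1 : ℕ) * EE (Gam P P) := by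
      rw [bochner]
      have : ∑ j, EE (Gam (pderiv j P) (pderiv j P)) ≤ ∑ j, D * EE ((pderiv j P) ^ 2) :=
        Finset.sum_le_sum fun j _ => (ih _ (by simpa using totalDegree_pderiv_le j P _ hP)).2
      have e : EE (Gam P P) = ∑ j, EE ((pderiv j P) ^ 2) := by
        simp [Gam, EE_sum, sq]
      rw [← Finset.mul_sum, ← e] at this
      push_cast; linarith
    refine ⟨h1, ?_⟩
    have h2 := EE_cauchy P (Lop P)
    have h3 : EE (P * Lop P) = - EE (Gam P P) := by rw [EE_Gam]; ring
    rw [h3, neg_sq] at h2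
    have h4 := EE_sq_nonneg P
    have h5 := EE_Gam_nonneg P
    have h6 : EE (Gam P P) ^ 2 ≤ EE (P ^ 2) * ((D + 1 : ℕ) * EE (Gam P P)) :=
      h2.trans (mul_le_mul_of_nonneg_left h1 h4)
    rcases h5.eq_or_lt with h | h
    · rw [← h]; positivity
    · have : EE (Gam P P) * EE (Gam P P) ≤ ((D + 1 : ℕ) * EE (P ^ 2)) * EE (Gam P P) := by
        nlinarith
      exact le_of_mul_le_mul_right this h

end Basics

section Poincare

variable {ι : Type} [Fintype ι]

lemma Lop_monomial (s : ι →₀ ℕ) (a : ℝ) :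
    Lop (monomial s a) = (∑ i, pderiv i (pderiv i (monomial s a))) -
      C ((s.degree : ℕ) : ℝ) * monomial s a := by
  have h := (isHomogeneous_monomial (R := ℝ) (d := s) a rfl).sum_X_mul_pderiv
  unfold Lop
  rw [Finset.sum_sub_distrib, h]
  simp [nsmul_eq_mul]

lemma range_Lop_aux (n : ℕ) : ∀ P : MvPolynomial ι ℝ, P.totalDegree ≤ n →
    ∃ (a : ℝ) (g : MvPolynomial ι ℝ), P = C a + Lop g := by
  induction n using Nat.strong_induction_on with
  | _ n ih =>
  intro P hP
  rcases Nat.eq_zero_or_pos n with h0 | hpos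
  · subst h0
    exact ⟨_, 0, by rw [Lop_zero, add_zero]; exact totalDegree_eq_zero_iff_eq_C.mp (Nat.le_zero.mp hP)⟩
  -- combine
  have key : ∀ (t : Finset (ι →₀ ℕ)) (c : (ι →₀ ℕ) → ℝ), (∀ s ∈ t, s.degree ≤ n) →
      ∃ (a : ℝ) (g : MvPolynomial ι ℝ), (∑ s ∈ t, monomial s (c s)) = C a + Lop g := by
    classical
    intro t c
    induction t using Finset.induction_on with
    | empty => intro _; exact ⟨0, 0, by simp [Lop_zero]⟩
    | insert s t hs iht =>
      intro hdeg
      obtain ⟨a, g, hg⟩ := iht fun s hs => hdeg s (Finset.mem_insert_of_mem hs)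
      have hsd := hdeg s (Finset.mem_insert_self _ _)
      have : ∃ (a : ℝ) (g : MvPolynomial ι ℝ), monomial s (c s) = C a + Lop g := by
        rcases Nat.eq_zero_or_pos s.degree with hz | hp
        · have : s = 0 := (Finsupp.degree_eq_zero_iff _).mp hz
          exact ⟨c s, 0, by rw [this, Lop_zero]; simp⟩
        · have hd : (∑ i, pderiv i (pderiv i (monomial s (c s)))).totalDegree ≤ n - 1 := by
            refine (totalDegree_finsetSum _ _).trans (Finset.sup_le fun i _ => ?_)
            refine (totalDegree_pderiv_le i _ n ?_)
            have h1 : (monomial s (c s)).totalDegree ≤ n := (totalDegree_monomial_le _ _).trans hsd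
            exact (totalDegree_pderiv_le i _ n h1).trans (by omega)
          obtain ⟨a1, g1, h1⟩ := ih (n - 1) (by omega) _ hd
          have hne : ((s.degree : ℕ) : ℝ) ≠ 0 := by positivity
          refine ⟨((s.degree : ℕ) : ℝ)⁻¹ * a1,
            C ((s.degree : ℕ) : ℝ)⁻¹ * (g1 + C (-1) * monomial s (c s)), ?_⟩
          rw [Lop_C_mul, Lop_add, Lop_C_mul, Lop_monomial, h1]
          have e : C ((s.degree : ℕ) : ℝ)⁻¹ * C ((s.degree : ℕ) : ℝ) = (1 : MvPolynomial ι ℝ) := by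
            rw [← C_mul, inv_mul_cancel₀ hne, C_1]
          simp only [map_mul, C_neg, C_1]
          linear_combination (-(monomial s (c s) : MvPolynomial ι ℝ)) * e
      obtain ⟨a', g', hg'⟩ := this
      refine ⟨a' + a, g' + g, ?_⟩
      rw [Finset.sum_insert hs, hg, hg', Lop_add, C_add]; ring
  rw [P.as_sum]
  exact key _ _ fun s hs => (le_totalDegree hs).trans hP

lemma poincare (f : MvPolynomial ι ℝ) : EE (f ^ 2) ≤ EE f ^ 2 + EE (Gam f f) := by
  obtain ⟨a, g, hg⟩ := range_Lop_aux _ f le_rfl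
  have h0 : EE (Lop g) = 0 := by
    have := EE_Gam 1 g
    rw [Gam_comm, ← C_1, Gam_C, EE_zero, C_1, one_mul] at this
    linarith
  have h1 : EE f = a := by rw [hg, EE_add, EE_C, h0, add_zero]
  have h2 : EE (f ^ 2) = a ^ 2 + EE (Lop g ^ 2) := by
    have : f ^ 2 = C (a ^ 2) + (C (2 * a) * Lop g + Lop g ^ 2) := by
      rw [hg]; simp only [map_mul, map_pow, map_ofNat]; ring
    rw [this, EE_add, EE_add, EE_C, EE_C_mul, h0]; ring
  have h3 : EE (Gam f g) = - EE (Lop g ^ 2) := by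
    rw [EE_Gam]
    have : f * Lop g = C a * Lop g + Lop g ^ 2 := by rw [hg]; ring
    rw [this, EE_add, EE_C_mul, h0]; ring
  have h4 : EE (Gam g g) ≤ EE (Lop g ^ 2) := by
    rw [bochner]
    have : 0 ≤ ∑ j, EE (Gam (pderiv j g) (pderiv j g)) :=
      Finset.sum_nonneg fun j _ => EE_Gam_nonneg _
    linarith
  have h5 : 0 ≤ EE (Gam f f + C 2 * Gam f g + Gam g g) := by
    refine EE_nonneg _ fun x => ?_
    have : eval x (Gam f f + C 2 * Gam f g + Gam g g) =
        ∑ i, (eval x (pderiv i f) + eval x (pderiv i g)) ^ 2 := by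
      simp only [Gam, map_add, map_mul, map_sum, eval_C, Finset.mul_sum, ← Finset.sum_add_distrib]
      refine Finset.sum_congr rfl fun i _ => by ring
    rw [this]
    exact Finset.sum_nonneg fun i _ => sq_nonneg _
  rw [EE_add, EE_add, EE_C_mul, h3] at h5
  rw [h2, h1]; linarith

/-- eigenfunctions of `-L` with eigenvalue `d`, of degree at most `d`. -/
def Eig (d : ℕ) (P : MvPolynomial ι ℝ) : Prop :=
  P.totalDegree ≤ d ∧ Lop P = C (-(d : ℝ)) * P

lemma Eig.Gam_eq {k : ℕ} {G : MvPolynomial ι ℝ} (h : Eig k G) :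
    EE (Gam G G) = k * EE (G ^ 2) := by
  rw [EE_Gam, h.2]
  have : G * (C (-(k : ℝ)) * G) = C (-(k : ℝ)) * G ^ 2 := by ring
  rw [this, EE_C_mul]; ring

lemma Eig.four_eq {k : ℕ} {G : MvPolynomial ι ℝ} (h : Eig k G) :
    k * EE (G ^ 4) = 3 * EE (G ^ 2 * Gam G G) := by
  have h1 := EE_Gam (G ^ 3) G
  rw [h.2] at h1
  have e1 : G ^ 3 * (C (-(k : ℝ)) * G) = C (-(k : ℝ)) * G ^ 4 := by ring
  have e2 : Gam (G ^ 3) G = C 3 * (G ^ 2 * Gam G G) := by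
    rw [Gam_comm, show G ^ 3 = G * (G * G) by ring, Gam_mul, Gam_mul, map_ofNat]; ring
  rw [e1, e2, EE_C_mul, EE_C_mul] at h1
  linarith

lemma Eig.fourth {k : ℕ} {G : MvPolynomial ι ℝ} (h : Eig k G) :
    EE (Gam G G ^ 2) ≤ k ^ 2 / 3 * EE (G ^ 4) := by
  have hdeg : (G ^ 2).totalDegree ≤ 2 * k :=
    (totalDegree_pow _ _).trans (Nat.mul_le_mul_left 2 h.1)
  have h1 := (spectral (2 * k) (G ^ 2) hdeg).1
  rw [EE_Gam] at h1
  have hL : Lop (G ^ 2) = C 2 * Gam G G - C (2 * (k : ℝ)) * G ^ 2 := by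
    rw [sq, Lop_mul, h.2]; simp only [map_mul, C_neg, map_ofNat]; ring
  have e1 : Lop (G ^ 2) ^ 2 = C 4 * Gam G G ^ 2 - C (8 * (k : ℝ)) * (G ^ 2 * Gam G G)
      + C (4 * (k : ℝ) ^ 2) * G ^ 4 := by
    rw [hL]; simp only [map_mul, map_pow, map_ofNat]; ring
  have e2 : G ^ 2 * Lop (G ^ 2) = C 2 * (G ^ 2 * Gam G G) - C (2 * (k : ℝ)) * G ^ 4 := by
    rw [hL]; simp only [map_mul, map_ofNat]; ring
  rw [e1, e2] at h1
  simp only [EE_add, EE_sub, EE_C_mul] at h1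
  push_cast at h1
  have h2 := h.four_eq
  nlinarith

/-- directional derivative -/
noncomputable def dir (h : ι → ℝ) (P : MvPolynomial ι ℝ) : MvPolynomial ι ℝ :=
  ∑ i, C (h i) * pderiv i P

lemma eval_dir (h x : ι → ℝ) (P : MvPolynomial ι ℝ) :
    eval x (dir h P) = ∑ i, h i * eval x (pderiv i P) := by
  simp [dir]

lemma totalDegree_dir_le (h : ι → ℝ) (P : MvPolynomial ι ℝ) (D : ℕ) (hP : P.totalDegree ≤ D) :
    (dir h P).totalDegree ≤ D - 1 := by
  refine (totalDegree_finsetSum _ _).trans (Finset.sup_le fun i _ => ?_)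
  refine (totalDegree_mul _ _).trans ?_
  rw [totalDegree_C, zero_add]
  exact totalDegree_pderiv_le i P D hP

lemma Eig.dir {k : ℕ} {F : MvPolynomial ι ℝ} (hF : Eig (k + 1) F) (h : ι → ℝ) :
    Eig k (dir h F) := by
  refine ⟨totalDegree_dir_le h F (k + 1) hF.1, ?_⟩
  unfold _root_.dir
  rw [Lop_sum, Finset.mul_sum]
  refine Finset.sum_congr rfl fun i _ => ?_
  rw [Lop_C_mul]
  have h1 : Lop (pderiv i F) = pderiv i (Lop F) + pderiv i F := by rw [pderiv_Lop]; ring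
  rw [h1, hF.2, pderiv_C_mul]
  simp only [Nat.cast_add, Nat.cast_one, neg_add, C_add, C_neg, C_1]; ring

/-- linear form -/
noncomputable def lin (v : ι → ℝ) : MvPolynomial ι ℝ := ∑ i, C (v i) * X i

lemma eval_lin (v h : ι → ℝ) : eval h (lin v) = ∑ i, v i * h i := by simp [lin]

lemma pderiv_lin (v : ι → ℝ) (i : ι) : pderiv i (lin v) = C (v i) := by
  classical
  simp only [lin, map_sum, pderiv_C_mul, pderiv_X]
  rw [Finset.sum_eq_single i]
  · simp
  · intro j _ hj; simp [hj]
  · simp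

lemma Gam_lin (v : ι → ℝ) : Gam (lin v) (lin v) = C (∑ i, v i ^ 2) := by
  simp only [Gam, pderiv_lin, map_sum]
  refine Finset.sum_congr rfl fun i _ => by rw [← C_mul, sq]

lemma Eig_lin (v : ι → ℝ) : Eig 1 (lin v) := by
  constructor
  · refine (totalDegree_finsetSum _ _).trans (Finset.sup_le fun i _ => ?_)
    refine (totalDegree_mul _ _).trans ?_
    simp
  · simp only [Lop, pderiv_lin, pderiv_C]
    rw [lin, Finset.mul_sum]
    refine Finset.sum_congr rfl fun i _ => by simp; ring

lemma lin_sq (v : ι → ℝ) : EE (lin v ^ 2) = ∑ i, v i ^ 2 := by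
  have := (Eig_lin v).Gam_eq
  rw [Gam_lin, EE_C] at this
  simpa using this.symm

lemma lin_four (v : ι → ℝ) : EE (lin v ^ 4) = 3 * (∑ i, v i ^ 2) ^ 2 := by
  have := (Eig_lin v).four_eq
  rw [Gam_lin, mul_comm (lin v ^ 2), EE_C_mul, lin_sq] at this
  simp only [Nat.cast_one, one_mul] at this
  rw [this]; ring

lemma integral_lin_sq (v : ι → ℝ) :
    ∫ h, (∑ i, h i * v i) ^ 2 ∂(gaussPi ι) = ∑ i, v i ^ 2 := by
  rw [← lin_sq]; simp [EE, eval_lin, mul_comm]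

lemma integral_lin_four (v : ι → ℝ) :
    ∫ h, (∑ i, h i * v i) ^ 4 ∂(gaussPi ι) = 3 * (∑ i, v i ^ 2) ^ 2 := by
  rw [← lin_four]; simp [EE, eval_lin, mul_comm]

end Poincare

section BiPoly

variable {ι κ : Type} [Fintype ι] [Fintype κ]

/-- functions of two groups of variables that are polynomial -/
def BiP (f : (ι → ℝ) → (κ → ℝ) → ℝ) : Prop :=
  ∃ Φ : MvPolynomial (ι ⊕ κ) ℝ, ∀ h x, f h x = eval (Sum.elim h x) Φ

lemma BiP.add {f g : (ι → ℝ) → (κ → ℝ) → ℝ} (hf : BiP f) (hg : BiP g) :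
    BiP (fun h x => f h x + g h x) := by
  obtain ⟨P, hP⟩ := hf; obtain ⟨Q, hQ⟩ := hg
  exact ⟨P + Q, fun h x => by simp [hP, hQ]⟩
lemma BiP.mul {f g : (ι → ℝ) → (κ → ℝ) → ℝ} (hf : BiP f) (hg : BiP g) :
    BiP (fun h x => f h x * g h x) := by
  obtain ⟨P, hP⟩ := hf; obtain ⟨Q, hQ⟩ := hg
  exact ⟨P * Q, fun h x => by simp [hP, hQ]⟩
lemma BiP.sub {f g : (ι → ℝ) → (κ → ℝ) → ℝ} (hf : BiP f) (hg : BiP g) :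
    BiP (fun h x => f h x - g h x) := by
  obtain ⟨P, hP⟩ := hf; obtain ⟨Q, hQ⟩ := hg
  exact ⟨P - Q, fun h x => by simp [hP, hQ]⟩
lemma BiP.pow {f : (ι → ℝ) → (κ → ℝ) → ℝ} (hf : BiP f) (n : ℕ) :
    BiP (fun h x => f h x ^ n) := by
  obtain ⟨P, hP⟩ := hf
  exact ⟨P ^ n, fun h x => by simp [hP]⟩
lemma BiP.const (a : ℝ) : BiP (fun (_ : ι → ℝ) (_ : κ → ℝ) => a) :=
  ⟨C a, fun h x => by simp⟩
lemma BiP.left (P : MvPolynomial ι ℝ) : BiP (fun (h : ι → ℝ) (_ : κ → ℝ) => eval h P) :=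
  ⟨rename Sum.inl P, fun h x => by rw [eval_rename]; rfl⟩
lemma BiP.right (P : MvPolynomial κ ℝ) : BiP (fun (_ : ι → ℝ) (x : κ → ℝ) => eval x P) :=
  ⟨rename Sum.inr P, fun h x => by rw [eval_rename]; rfl⟩
lemma BiP.coord (i : ι) : BiP (fun (h : ι → ℝ) (_ : κ → ℝ) => h i) := by
  simpa using BiP.left (κ := κ) (X i : MvPolynomial ι ℝ)
lemma BiP.coord' (i : κ) : BiP (fun (_ : ι → ℝ) (h : κ → ℝ) => h i) := by
  simpa using BiP.right (ι := ι) (X i : MvPolynomial κ ℝ)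
lemma BiP.sum {α : Type*} (s : Finset α) {f : α → (ι → ℝ) → (κ → ℝ) → ℝ}
    (hf : ∀ a, BiP (f a)) : BiP (fun h x => ∑ a ∈ s, f a h x) := by
  choose P hP using hf
  exact ⟨∑ a ∈ s, P a, fun h x => by simp [hP]⟩

lemma BiP.integrable {f : (ι → ℝ) → (κ → ℝ) → ℝ} (hf : BiP f) :
    Integrable (Function.uncurry f) ((gaussPi ι).prod (gaussPi κ)) := by
  obtain ⟨P, hP⟩ := hf
  have : Function.uncurry f = fun z => eval (Sum.elim z.1 z.2) P := by
    funext ⟨h, x⟩; simp [hP]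
  rw [this]
  clear this hP
  induction P using MvPolynomial.induction_on' with
  | monomial s a =>
    have : (fun z : (ι → ℝ) × (κ → ℝ) => eval (Sum.elim z.1 z.2) (monomial s a)) =
        fun z => a * (eval z.1 (∏ i, X i ^ (s (Sum.inl i))) *
          eval z.2 (∏ i, X i ^ (s (Sum.inr i)))) := by
      funext z
      rw [eval_monomial, Finsupp.prod_fintype _ _ (by simp), Fintype.prod_sum_type]
      simp
    rw [this]
    exact ((integrable_evalP _).mul_prod (integrable_evalP _)).const_mul a
  | add p q hp hq => simp only [map_add]; exact hp.add hq

lemma BiP.swap {f : (ι → ℝ) → (κ → ℝ) → ℝ} (hf : BiP f) :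
    ∫ h, ∫ x, f h x ∂(gaussPi κ) ∂(gaussPi ι) = ∫ x, ∫ h, f h x ∂(gaussPi ι) ∂(gaussPi κ) :=
  integral_integral_swap hf.integrable

lemma BiP.int_left {f : (ι → ℝ) → (κ → ℝ) → ℝ} (hf : BiP f) :
    Integrable (fun h => ∫ x, f h x ∂(gaussPi κ)) (gaussPi ι) :=
  hf.integrable.integral_prod_left

lemma BiP.int_right {f : (ι → ℝ) → (κ → ℝ) → ℝ} (hf : BiP f) :
    Integrable (fun x => ∫ h, f h x ∂(gaussPi ι)) (gaussPi κ) :=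
  hf.integrable.integral_prod_right

lemma BiP_dir (P : MvPolynomial ι ℝ) : BiP (fun h x => eval x (dir h P)) := by
  simp only [eval_dir]
  exact BiP.sum _ fun i => (BiP.coord i).mul (BiP.right _)

lemma eval_Gam_self (P : MvPolynomial ι ℝ) (x : ι → ℝ) :
    eval x (Gam P P) = ∑ i, (eval x (pderiv i P)) ^ 2 := by
  simp [Gam, sq]

lemma int_dir_sq (P : MvPolynomial ι ℝ) :
    ∫ h, EE (dir h P ^ 2) ∂(gaussPi ι) = EE (Gam P P) := by
  have := ((BiP_dir P).pow 2).swap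
  simp only [EE, map_pow]
  rw [this]
  simp only [eval_dir, integral_lin_sq, eval_Gam_self]

lemma int_dir_four (P : MvPolynomial ι ℝ) :
    ∫ h, EE (dir h P ^ 4) ∂(gaussPi ι) = 3 * EE (Gam P P ^ 2) := by
  have := ((BiP_dir P).pow 4).swap
  simp only [EE, map_pow]
  rw [this]
  simp only [eval_dir, integral_lin_four, eval_Gam_self]
  rw [integral_const_mul]

lemma integrable_dir_pow (P : MvPolynomial ι ℝ) (n : ℕ) :
    Integrable (fun h => EE (dir h P ^ n)) (gaussPi ι) := by
  simpa only [EE, map_pow] using ((BiP_dir P).pow n).int_left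

/-- `h ↦ E[(∂_h P)^2]` as a polynomial -/
noncomputable def aPol (P : MvPolynomial ι ℝ) : MvPolynomial ι ℝ :=
  ∑ i, ∑ j, C (EE (pderiv i P * pderiv j P)) * (X i * X j)

lemma eval_aPol (P : MvPolynomial ι ℝ) (h : ι → ℝ) : eval h (aPol P) = EE (dir h P ^ 2) := by
  have : dir h P ^ 2 = ∑ i, ∑ j, C (h i * h j) * (pderiv i P * pderiv j P) := by
    rw [sq, dir, Finset.sum_mul_sum]
    refine Finset.sum_congr rfl fun i _ => Finset.sum_congr rfl fun j _ => ?_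
    rw [C_mul]; ring
  rw [this, EE_sum]
  simp only [EE_sum, EE_C_mul]
  simp only [aPol, map_sum, map_mul, eval_C, eval_X]
  refine Finset.sum_congr rfl fun i _ => Finset.sum_congr rfl fun j _ => by ring

lemma aPol_sq (P : MvPolynomial ι ℝ) : EE (aPol P ^ 2) ≤ 3 * EE (Gam P P) ^ 2 := by
  set A := EE (aPol P ^ 2) with hA
  have hA0 : 0 ≤ A := EE_sq_nonneg _
  have hb : BiP (fun (h x : ι → ℝ) => eval h (aPol P) * eval x (dir h P) ^ 2) :=
    (BiP.left _).mul ((BiP_dir P).pow 2)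
  have h1 : A = ∫ x, ∫ h, eval h (aPol P) * eval x (dir h P) ^ 2 ∂(gaussPi ι) ∂(gaussPi ι) := by
    rw [← hb.swap, hA, EE]
    refine integral_congr_ae (ae_of_all _ fun h => ?_)
    simp only
    rw [integral_const_mul, map_pow, sq]
    congr 1
    rw [eval_aPol, EE]; simp
  have h2 : ∀ x, ∫ h, eval h (aPol P) * eval x (dir h P) ^ 2 ∂(gaussPi ι) ≤
      √(3 * A) * eval x (Gam P P) := by
    intro x
    set v : ι → ℝ := fun i => eval x (pderiv i P)
    have e : ∫ h, eval h (aPol P) * eval x (dir h P) ^ 2 ∂(gaussPi ι) = EE (aPol P * lin v ^ 2) := by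
      simp only [EE, map_mul, map_pow, eval_lin, eval_dir, v]
      simp only [mul_comm]
    have hc := EE_cauchy (aPol P) (lin v ^ 2)
    rw [← pow_mul, lin_four, ← hA] at hc
    have hg : eval x (Gam P P) = ∑ i, v i ^ 2 := eval_Gam_self P x
    rw [e, hg]
    have hs : 0 ≤ ∑ i, v i ^ 2 := Finset.sum_nonneg fun i _ => sq_nonneg _
    apply le_of_sq_le_sq _ (by positivity)
    rw [mul_pow, Real.sq_sqrt (by positivity)]
    linarith
  have h3 : A ≤ √(3 * A) * EE (Gam P P) := by
    rw [EE, ← integral_const_mul]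
    conv_lhs => rw [h1]
    exact integral_mono hb.int_right ((integrable_evalP _).const_mul _) h2
  have hg := EE_Gam_nonneg P
  have h4 : A * A ≤ (3 * EE (Gam P P) ^ 2) * A := by
    have := mul_self_le_mul_self hA0 h3
    have e : √(3 * A) * EE (Gam P P) * (√(3 * A) * EE (Gam P P)) =
      (√(3 * A)) ^ 2 * EE (Gam P P) ^ 2 := by ring
    rw [e, Real.sq_sqrt (by positivity)] at this
    linarith
  rcases hA0.eq_or_lt with h | h
  · rw [← h]; positivity
  · exact le_of_mul_le_mul_right h4 h

/-- hypercontractivity constants -/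
noncomputable def hc : ℕ → ℝ
  | 0 => 2
  | (D + 1) => 2 + 16 * ((D + 1 : ℕ) : ℝ) ^ 2 * hc D

lemma hc_nonneg (D : ℕ) : 0 ≤ hc D := by
  induction D with
  | zero => simp [hc]
  | succ D ih => simp only [hc]; positivity

lemma Gam_sq_of_hyper (D : ℕ) (hyp : ∀ P : MvPolynomial ι ℝ, P.totalDegree ≤ D →
      EE (P ^ 4) ≤ hc D * EE (P ^ 2) ^ 2)
    (P : MvPolynomial ι ℝ) (hP : P.totalDegree ≤ D + 1) :
    EE (Gam P P ^ 2) ≤ hc D * EE (Gam P P) ^ 2 := by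
  have h1 : 3 * EE (Gam P P ^ 2) ≤ ∫ h, hc D * eval h (aPol P ^ 2) ∂(gaussPi ι) := by
    rw [← int_dir_four]
    refine integral_mono (integrable_dir_pow P 4) ((integrable_evalP _).const_mul _) fun h => ?_
    have := hyp (dir h P) (totalDegree_dir_le h P _ hP)
    simpa [eval_aPol] using this
  rw [integral_const_mul] at h1
  have h2 := mul_le_mul_of_nonneg_left (aPol_sq P) (hc_nonneg D)
  simp only [EE] at h1 h2 ⊢
  linarith

lemma hyper (D : ℕ) : ∀ P : MvPolynomial ι ℝ, P.totalDegree ≤ D →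
      EE (P ^ 4) ≤ hc D * EE (P ^ 2) ^ 2 := by
  induction D with
  | zero =>
    intro P hP
    rw [totalDegree_eq_zero_iff_eq_C.mp (Nat.le_zero.mp hP)]
    simp only [← C_pow, EE_C, hc]
    nlinarith [sq_nonneg ((coeff 0 P) ^ 2)]
  | succ D ih =>
    intro P hP
    have h1 := Gam_sq_of_hyper D ih P hP
    have h2 := (spectral (D + 1) P hP).2
    have h3 := poincare (P ^ 2)
    have h4 : EE (Gam (P ^ 2) (P ^ 2)) ≤ EE (C (1 / 2) * P ^ 4 + C 8 * Gam P P ^ 2) := by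
      refine EE_mono _ _ fun x => ?_
      have : Gam (P ^ 2) (P ^ 2) = C 4 * P ^ 2 * Gam P P := by
        rw [sq, Gam_mul, Gam_comm, Gam_mul, map_ofNat]; ring
      rw [this]
      simp only [map_mul, map_pow, map_add, eval_C]
      nlinarith [sq_nonneg (eval x P ^ 2 - 4 * eval x (Gam P P))]
    rw [EE_add, EE_C_mul, EE_C_mul] at h4
    rw [← pow_mul] at h3
    have h5 : EE (Gam P P) ^ 2 ≤ (((D + 1 : ℕ) : ℝ) * EE (P ^ 2)) ^ 2 :=
      pow_le_pow_left₀ (EE_Gam_nonneg P) h2 2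
    have h6 := mul_le_mul_of_nonneg_left h5 (hc_nonneg D)
    simp only [hc]
    norm_num at h3
    nlinarith

lemma Gam_sq (D : ℕ) (P : MvPolynomial ι ℝ) (hP : P.totalDegree ≤ D) :
    EE (Gam P P ^ 2) ≤ hc D * (D * EE (P ^ 2)) ^ 2 := by
  have h1 := Gam_sq_of_hyper D (hyper D) P (by omega)
  have h2 := pow_le_pow_left₀ (EE_Gam_nonneg P) (spectral D P hP).2 2
  exact h1.trans (mul_le_mul_of_nonneg_left h2 (hc_nonneg D))

end BiPoly

section Inherit

variable {ι : Type} [Fintype ι]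

lemma Gam_dir_dir (a b : ι → ℝ) (F : MvPolynomial ι ℝ) :
    Gam (dir a F) (dir b F) =
      ∑ k, ∑ l, C (a k * b l) * Gam (pderiv k F) (pderiv l F) := by
  simp only [Gam, dir, map_sum, pderiv_C_mul]
  simp only [Finset.sum_mul_sum]
  simp only [Finset.mul_sum]
  rw [Finset.sum_comm]
  refine Finset.sum_congr rfl fun k _ => ?_
  rw [Finset.sum_comm]
  refine Finset.sum_congr rfl fun l _ => Finset.sum_congr rfl fun i _ => ?_
  rw [C_mul]; ring

lemma eval_Gam_dir_dir (a b x : ι → ℝ) (F : MvPolynomial ι ℝ) :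
    eval x (Gam (dir a F) (dir b F)) =
      ∑ k, ∑ l, a k * b l * eval x (Gam (pderiv k F) (pderiv l F)) := by
  rw [Gam_dir_dir]; simp

lemma BiP_Gdir (F : MvPolynomial ι ℝ) :
    BiP (fun h x => eval x (Gam (dir h F) (dir h F))) := by
  simp only [eval_Gam_dir_dir]
  exact BiP.sum _ fun k => BiP.sum _ fun l => ((BiP.coord k).mul (BiP.coord l)).mul (BiP.right _)

lemma BiP_Gdir' (F : MvPolynomial ι ℝ) (a : ι → ℝ) :
    BiP (fun b x => eval x (Gam (dir a F) (dir b F))) := by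
  simp only [eval_Gam_dir_dir]
  exact BiP.sum _ fun k => BiP.sum _ fun l => ((BiP.const (a k)).mul (BiP.coord l)).mul (BiP.right _)

/-- the elementary defect functional -/
noncomputable def sfun (F : MvPolynomial ι ℝ) (d : ℝ) (a b : ι → ℝ) : ℝ :=
  EE ((Gam (dir a F) (dir b F) - C d) ^ 2)

lemma sfun_nonneg (F : MvPolynomial ι ℝ) (d : ℝ) (a b : ι → ℝ) : 0 ≤ sfun F d a b :=
  EE_sq_nonneg _

lemma T1_int (F : MvPolynomial ι ℝ) (d : ℝ) :
    Integrable (fun h => sfun F d h h) (gaussPi ι) := by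
  have := (((BiP_Gdir F).sub (BiP.const d)).pow 2).int_left
  simpa [sfun, EE] using this

lemma T1_le {k : ℕ} {F : MvPolynomial ι ℝ} (hF : Eig (k + 1) F) (c : ℝ) :
    ∫ h, sfun F (k * c) h h ∂(gaussPi ι) ≤ k ^ 2 * EE ((Gam F F - C c) ^ 2) := by
  have h1 : ∀ h, sfun F (k * c) h h ≤
      k ^ 2 / 3 * EE (dir h F ^ 4) - 2 * k ^ 2 * c * EE (dir h F ^ 2) + k ^ 2 * c ^ 2 := by
    intro h
    have e := hF.dir h
    have e1 := e.fourth
    have e2 := e.Gam_eq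
    have e3 : (Gam (dir h F) (dir h F) - C (k * c)) ^ 2 = Gam (dir h F) (dir h F) ^ 2
        - C (2 * (k * c)) * Gam (dir h F) (dir h F) + C ((k * c) ^ 2) := by
      simp only [map_mul, map_pow, map_ofNat]; ring
    rw [sfun, e3, EE_add, EE_sub, EE_C_mul, EE_C, e2]
    nlinarith
  have i4 := integrable_dir_pow F 4
  have i2 := integrable_dir_pow F 2
  have h2 : ∫ h, sfun F (k * c) h h ∂(gaussPi ι) ≤ ∫ h, (k ^ 2 / 3 * EE (dir h F ^ 4) -
      2 * k ^ 2 * c * EE (dir h F ^ 2) + k ^ 2 * c ^ 2) ∂(gaussPi ι) :=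
    integral_mono (T1_int F (k * c))
      (((i4.const_mul (k ^ 2 / 3 : ℝ)).sub (i2.const_mul (2 * k ^ 2 * c))).add
        (integrable_const (k ^ 2 * c ^ 2 : ℝ))) h1
  refine h2.trans ?_
  have i5 : Integrable (fun h => k ^ 2 / 3 * EE (dir h F ^ 4) -
      2 * k ^ 2 * c * EE (dir h F ^ 2)) (gaussPi ι) := (i4.const_mul _).sub (i2.const_mul _)
  rw [integral_add i5 (integrable_const _),
      integral_sub (i4.const_mul _) (i2.const_mul _), integral_const_mul, integral_const_mul,
      int_dir_four, int_dir_sq]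
  have e3 : (Gam F F - C c) ^ 2 = Gam F F ^ 2 - C (2 * c) * Gam F F + C (c ^ 2) := by
    simp only [map_mul, map_pow, map_ofNat]; ring
  rw [e3, EE_add, EE_sub, EE_C_mul, EE_C]
  apply le_of_eq; simp; ring

/-- quadratic form polynomial -/
noncomputable def qpol (W : ι → ι → ℝ) : MvPolynomial ι ℝ :=
  ∑ k, ∑ l, C (W k l) * (X k * X l)

lemma eval_qpol (W : ι → ι → ℝ) (a : ι → ℝ) :
    eval a (qpol W) = ∑ k, ∑ l, a k * a l * W k l := by
  simp only [qpol, map_sum, map_mul, eval_C, eval_X]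
  exact Finset.sum_congr rfl fun i _ => Finset.sum_congr rfl fun j _ => by ring

lemma pderiv_qpol (W : ι → ι → ℝ) (hW : ∀ k l, W k l = W l k) (a : ι → ℝ) (j : ι) :
    eval a (pderiv j (qpol W)) = 2 * ∑ k, a k * W k j := by
  classical
  simp only [qpol, map_sum, pderiv_C_mul]
  simp only [map_mul, Derivation.leibniz, smul_eq_mul, pderiv_X,
    map_add, eval_C, eval_X, mul_add, Finset.sum_add_distrib]
  have e : ∀ i, eval a ((Pi.single j 1 : ι → MvPolynomial ι ℝ) i) = if i = j then 1 else 0 := by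
    intro i
    by_cases h : i = j
    · subst h; simp
    · simp [h]
  simp only [e, mul_ite, mul_one, mul_zero, Finset.sum_ite_eq', Finset.mem_univ, if_true]
  rw [Finset.sum_comm (f := fun x i => if x = j then W x i * a i else 0)]
  simp only [Finset.sum_ite_eq', Finset.mem_univ, if_true]
  rw [two_mul]
  congr 1
  · exact Finset.sum_congr rfl fun i _ => by ring
  · exact Finset.sum_congr rfl fun i _ => by rw [hW j i]; ring

lemma qpol_deg (W : ι → ι → ℝ) (d : ℝ) : (qpol W - C d).totalDegree ≤ 2 := by
  refine (totalDegree_sub _ _).trans (max_le ?_ (by simp))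
  refine (totalDegree_finsetSum _ _).trans (Finset.sup_le fun i _ => ?_)
  refine (totalDegree_finsetSum _ _).trans (Finset.sup_le fun j _ => ?_)
  refine (totalDegree_mul _ _).trans ?_
  rw [totalDegree_C, zero_add]
  refine (totalDegree_mul _ _).trans ?_
  simp

lemma qpol_ineq (W : ι → ι → ℝ) (hW : ∀ k l, W k l = W l k) (d : ℝ) :
    ∫ a, (∑ l, (∑ k, a k * W k l) ^ 2) ∂(gaussPi ι) ≤
      1 / 2 * ∫ a, ((∑ k, ∑ l, a k * a l * W k l) - d) ^ 2 ∂(gaussPi ι) := by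
  have h := (spectral 2 (qpol W - C d) (qpol_deg W d)).2
  have e1 : EE (Gam (qpol W - C d) (qpol W - C d)) =
      4 * ∫ a, (∑ l, (∑ k, a k * W k l) ^ 2) ∂(gaussPi ι) := by
    rw [EE, ← integral_const_mul]
    congr 1; funext a
    rw [eval_Gam_self, Finset.mul_sum]
    refine Finset.sum_congr rfl fun j _ => ?_
    rw [map_sub, pderiv_C, sub_zero, pderiv_qpol W hW]; ring
  have e2 : EE ((qpol W - C d) ^ 2) =
      ∫ a, ((∑ k, ∑ l, a k * a l * W k l) - d) ^ 2 ∂(gaussPi ι) := by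
    simp only [EE, map_pow, map_sub, eval_C, eval_qpol]
  rw [e1, e2] at h
  push_cast at h
  linarith

lemma T2_le (F : MvPolynomial ι ℝ) (d : ℝ) :
    ∫ a, ∫ b, sfun F 0 a b ∂(gaussPi ι) ∂(gaussPi ι) ≤
      1 / 2 * ∫ h, sfun F d h h ∂(gaussPi ι) := by
  have hW : ∀ x k l, eval x (Gam (pderiv k F) (pderiv l F)) =
      eval x (Gam (pderiv l F) (pderiv k F)) := fun x k l => by rw [Gam_comm]
  have h1 : ∀ a, ∫ b, sfun F 0 a b ∂(gaussPi ι) =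
      ∫ x, (∑ l, (∑ k, a k * eval x (Gam (pderiv k F) (pderiv l F))) ^ 2) ∂(gaussPi ι) := by
    intro a
    simp only [sfun, EE, C_0, sub_zero, map_pow]
    rw [((BiP_Gdir' F a).pow 2).swap]
    congr 1; funext x
    rw [← integral_lin_sq]
    congr 1; funext b
    rw [eval_Gam_dir_dir, Finset.sum_comm]
    congr 1
    refine Finset.sum_congr rfl fun i _ => ?_
    rw [Finset.mul_sum]
    exact Finset.sum_congr rfl fun j _ => by ring
  simp only [h1]
  have hb : BiP (fun (a x : ι → ℝ) =>
      ∑ l, (∑ k, a k * eval x (Gam (pderiv k F) (pderiv l F))) ^ 2) :=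
    BiP.sum _ fun l => (BiP.sum _ fun k => (BiP.coord k).mul (BiP.right _)).pow 2
  rw [hb.swap]
  have hb2 := ((BiP_Gdir F).sub (BiP.const d)).pow 2
  have e : ∫ h, sfun F d h h ∂(gaussPi ι) = ∫ x, ∫ h,
      (eval x (Gam (dir h F) (dir h F)) - d) ^ 2 ∂(gaussPi ι) ∂(gaussPi ι) := by
    rw [← hb2.swap]; simp [sfun, EE]
  rw [e, ← integral_const_mul]
  refine integral_mono hb.int_right (hb2.int_right.const_mul _) fun x => ?_
  have := qpol_ineq (fun k l => eval x (Gam (pderiv k F) (pderiv l F))) (hW x) d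
  simp only [eval_Gam_dir_dir]
  exact this

lemma BiP_sfun (F : MvPolynomial ι ℝ) (d : ℝ) : BiP (sfun F d) := by
  have h : ∀ a b, sfun F d a b = (∑ k, ∑ l, ∑ k', ∑ l', (a k * b l) * (a k' * b l') *
      EE (Gam (pderiv k F) (pderiv l F) * Gam (pderiv k' F) (pderiv l' F)))
      - (∑ k, ∑ l, (a k * b l) * (2 * d * EE (Gam (pderiv k F) (pderiv l F)))) + d ^ 2 := by
    intro a b
    have e3 : (Gam (dir a F) (dir b F) - C d) ^ 2 = Gam (dir a F) (dir b F) *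
        Gam (dir a F) (dir b F) - C (2 * d) * Gam (dir a F) (dir b F) + C (d ^ 2) := by
      simp only [map_mul, map_pow, map_ofNat]; ring
    rw [sfun, e3, EE_add, EE_sub, EE_C_mul, EE_C, Gam_dir_dir]
    congr 2
    · have hh : ∀ k l k' l', EE (C (a k * b l) * Gam (pderiv k F) (pderiv l F) *
          (C (a k' * b l') * Gam (pderiv k' F) (pderiv l' F))) = (a k * b l) * (a k' * b l') *
          EE (Gam (pderiv k F) (pderiv l F) * Gam (pderiv k' F) (pderiv l' F)) := by
        intro k l k' l'
        rw [← EE_C_mul]; congr 1; simp only [map_mul]; ring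
      simp only [Finset.sum_mul, EE_sum]
      simp only [Finset.mul_sum, EE_sum, hh]
    · simp only [EE_sum, EE_C_mul, Finset.mul_sum]
      exact Finset.sum_congr rfl fun i _ => Finset.sum_congr rfl fun j _ => by ring
  obtain ⟨f, hf⟩ : ∃ f, f = sfun F d := ⟨_, rfl⟩
  rw [← hf]
  simp only [← hf] at h
  rw [show f = fun a b => f a b from rfl]
  simp only [h]
  refine (BiP.sub ?_ ?_).add (BiP.const _)
  · exact BiP.sum _ fun k => BiP.sum _ fun l => BiP.sum _ fun k' => BiP.sum _ fun l' =>
      (((BiP.coord k).mul (BiP.coord' l)).mul ((BiP.coord k').mul (BiP.coord' l'))).mul (BiP.const _)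
  · exact BiP.sum _ fun k => BiP.sum _ fun l =>
      ((BiP.coord k).mul (BiP.coord' l)).mul (BiP.const _)

lemma BiP.continuous {κ : Type} [Fintype κ] {f : (ι → ℝ) → (κ → ℝ) → ℝ} (hf : BiP f) :
    Continuous (Function.uncurry f) := by
  obtain ⟨P, hP⟩ := hf
  have : Function.uncurry f = fun z => eval (Sum.elim z.1 z.2) P := by
    funext ⟨h, x⟩; simp [hP]
  rw [this]
  refine (MvPolynomial.continuous_eval P).comp ?_
  refine continuous_pi fun i => ?_
  rcases i with i | i
  · exact (continuous_apply i).comp continuous_fst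
  · exact (continuous_apply i).comp continuous_snd

/-- the law of `p` independent Gaussian vectors -/
noncomputable def nuP (ι : Type) [Fintype ι] (p : ℕ) : Measure (Fin p → ι → ℝ) :=
  Measure.pi fun _ => gaussPi ι

instance (p : ℕ) : IsProbabilityMeasure (nuP ι p) := by unfold nuP; infer_instance

lemma mp_eval (p : ℕ) (i : Fin p) :
    MeasurePreserving (fun N : Fin p → ι → ℝ => N i) (nuP ι p) (gaussPi ι) :=
  measurePreserving_eval _ i

lemma mp_pair (p : ℕ) (i j : Fin p) (hij : i ≠ j) :
    MeasurePreserving (fun N : Fin p → ι → ℝ => (N i, N j)) (nuP ι p)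
      ((gaussPi ι).prod (gaussPi ι)) := by
  have h := iIndepFun_pi (μ := fun _ : Fin p => gaussPi ι) (X := fun _ => id)
    (fun _ => aemeasurable_id)
  have h2 : IndepFun (fun ω : Fin p → ι → ℝ => ω i) (fun ω => ω j)
    (Measure.pi fun _ => gaussPi ι) := h.indepFun hij
  rw [indepFun_iff_map_prod_eq_prod_map_map (measurable_pi_apply i).aemeasurable
    (measurable_pi_apply j).aemeasurable] at h2
  refine ⟨by fun_prop, ?_⟩
  have e1 := (mp_eval (ι := ι) p i).map_eq
  have e2 := (mp_eval (ι := ι) p j).map_eq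
  simp only [nuP] at e1 e2 h2 ⊢
  rw [h2, e1, e2]

noncomputable def Sfun (F : MvPolynomial ι ℝ) (d : ℝ) (p : ℕ) (N : Fin p → ι → ℝ) : ℝ :=
  ∑ i, ∑ j, sfun F (if i = j then d else 0) (N i) (N j)

lemma Sfun_nonneg (F : MvPolynomial ι ℝ) (d : ℝ) (p : ℕ) (N : Fin p → ι → ℝ) :
    0 ≤ Sfun F d p N :=
  Finset.sum_nonneg fun _ _ => Finset.sum_nonneg fun _ _ => sfun_nonneg _ _ _ _

lemma sfun_cont2 (F : MvPolynomial ι ℝ) (d : ℝ) (p : ℕ) (i j : Fin p) :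
    Continuous (fun N : Fin p → ι → ℝ => sfun F d (N i) (N j)) := by
  obtain ⟨f, hf⟩ : ∃ f, f = sfun F d := ⟨_, rfl⟩
  have h1 := (BiP_sfun F d).continuous
  rw [← hf] at h1 ⊢
  have h2 : Continuous (fun N : Fin p → ι → ℝ => (N i, N j)) :=
    (continuous_apply i).prodMk (continuous_apply j)
  exact h1.comp h2

lemma Sfun_continuous (F : MvPolynomial ι ℝ) (d : ℝ) (p : ℕ) :
    Continuous (fun N => Sfun F d p N) := by
  simp only [Sfun]
  refine continuous_finsetSum _ fun i _ => continuous_finsetSum _ fun j _ => ?_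
  exact sfun_cont2 F _ p i j

lemma Sfun_int {k : ℕ} {F : MvPolynomial ι ℝ} (hF : Eig (k + 1) F) (c : ℝ) (p : ℕ) :
    Integrable (Sfun F (k * c) p) (nuP ι p) ∧
    ∫ N, Sfun F (k * c) p N ∂(nuP ι p) ≤ p ^ 2 * (k ^ 2 * EE ((Gam F F - C c) ^ 2)) := by
  have hT := T1_le hF c
  have h0 : 0 ≤ ∫ h, sfun F (k * c) h h ∂(gaussPi ι) := integral_nonneg fun h => sfun_nonneg _ _ _ _
  have key : ∀ i j : Fin p,
      Integrable (fun N => sfun F (if i = j then (k * c) else 0) (N i) (N j)) (nuP ι p) ∧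
      ∫ N, sfun F (if i = j then (k * c) else 0) (N i) (N j) ∂(nuP ι p) ≤
        k ^ 2 * EE ((Gam F F - C c) ^ 2) := by
    intro i j
    by_cases hij : i = j
    · subst hij
      simp only [if_true]
      have mp := mp_eval (ι := ι) p i
      have hi := T1_int F (k * c)
      refine ⟨mp.integrable_comp_of_integrable hi, ?_⟩
      have := mp.map_eq
      rw [← this, integral_map mp.measurable.aemeasurable (by rw [this]; exact hi.1)] at hT
      exact hT
    · simp only [hij, if_false]
      have mp := mp_pair (ι := ι) p i j hij
      have hi := (BiP_sfun F 0).integrable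
      refine ⟨mp.integrable_comp_of_integrable hi, ?_⟩
      have e : ∫ N, sfun F 0 (N i) (N j) ∂(nuP ι p) =
          ∫ a, ∫ b, sfun F 0 a b ∂(gaussPi ι) ∂(gaussPi ι) := by
        have := mp.map_eq
        have h3 := integral_prod (f := Function.uncurry (sfun F 0)) hi
        rw [← this, integral_map mp.measurable.aemeasurable (by rw [this]; exact hi.1)] at h3
        exact h3
      rw [e]
      have := T2_le F (k * c)
      linarith
  unfold Sfun
  refine ⟨integrable_finsetSum _ fun i _ => integrable_finsetSum _ fun j _ => (key i j).1, ?_⟩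
  rw [integral_finsetSum _ fun i _ => integrable_finsetSum _ fun j _ => (key i j).1]
  calc _ ≤ ∑ i : Fin p, ∑ j : Fin p, k ^ 2 * EE ((Gam F F - C c) ^ 2) := by
        refine Finset.sum_le_sum fun i _ => ?_
        rw [integral_finsetSum _ fun j _ => (key i j).1]
        exact Finset.sum_le_sum fun j _ => (key i j).2
    _ = _ := by simp; ring

lemma dir_comb (F : MvPolynomial ι ℝ) {p : ℕ} (N : Fin p → ι → ℝ) (u : Fin p → ℝ) :
    dir (fun i => ∑ j, u j * N j i) F = ∑ j, C (u j) * dir (N j) F := by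
  simp only [dir, map_sum, map_mul, Finset.sum_mul, Finset.mul_sum]
  rw [Finset.sum_comm]
  exact Finset.sum_congr rfl fun i _ => Finset.sum_congr rfl fun j _ => by ring

lemma good_dir (F : MvPolynomial ι ℝ) (d : ℝ) {p : ℕ} (N : Fin p → ι → ℝ) (u : Fin p → ℝ)
    (hu : ∑ j, u j ^ 2 = 1) :
    EE ((Gam (dir (fun i => ∑ j, u j * N j i) F) (dir (fun i => ∑ j, u j * N j i) F) - C d) ^ 2)
      ≤ Sfun F d p N := by
  have e : Sfun F d p N = EE (∑ i, ∑ j,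
      (Gam (dir (N i) F) (dir (N j) F) - C (if i = j then d else 0)) ^ 2) := by
    simp only [Sfun, sfun, EE_sum]
  rw [e]
  refine EE_mono _ _ fun x => ?_
  have e1 : eval x (Gam (dir (fun i => ∑ j, u j * N j i) F) (dir (fun i => ∑ j, u j * N j i) F)
      - C d) = ∑ z : Fin p × Fin p, (u z.1 * u z.2) *
        (eval x (Gam (dir (N z.1) F) (dir (N z.2) F)) - (if z.1 = z.2 then d else 0)) := by
    rw [Fintype.sum_prod_type]
    simp only [mul_sub, Finset.sum_sub_distrib, map_sub, eval_C]
    congr 1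
    · rw [dir_comb]
      simp only [Gam, map_sum, map_mul, pderiv_C_mul, eval_C]
      simp only [Finset.sum_mul_sum]
      simp only [Finset.mul_sum]
      rw [Finset.sum_comm]
      refine Finset.sum_congr rfl fun k _ => ?_
      rw [Finset.sum_comm]
      refine Finset.sum_congr rfl fun l _ => Finset.sum_congr rfl fun i _ => ?_
      ring
    · simp only [mul_ite, mul_zero, Finset.sum_ite_eq, Finset.mem_univ, if_true]
      rw [← Finset.sum_mul]
      simp only [← sq, hu, one_mul]
  rw [map_pow, e1]
  refine (Finset.sum_mul_sq_le_sq_mul_sq _ _ _).trans ?_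
  have e2 : ∑ z : Fin p × Fin p, (u z.1 * u z.2) ^ 2 = 1 := by
    rw [Fintype.sum_prod_type]
    simp only [mul_pow, ← Finset.mul_sum, hu, mul_one]
  rw [e2, one_mul, Fintype.sum_prod_type]
  simp

end Inherit

section Fourier

variable {ι : Type} [Fintype ι]

/-- regularised inverse of the carre du champ -/
noncomputable def RR (G : MvPolynomial ι ℝ) (η : ℝ) (x : ι → ℝ) : ℝ := (eval x (Gam G G) + η)⁻¹

lemma S_nonneg (G : MvPolynomial ι ℝ) (x : ι → ℝ) : 0 ≤ eval x (Gam G G) := by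
  rw [eval_Gam_self]; exact Finset.sum_nonneg fun _ _ => sq_nonneg _

lemma RR_pos (G : MvPolynomial ι ℝ) {η : ℝ} (hη : 0 < η) (x : ι → ℝ) : 0 < RR G η x :=
  inv_pos.mpr (add_pos_of_nonneg_of_pos (S_nonneg G x) hη)

lemma RR_le (G : MvPolynomial ι ℝ) {η : ℝ} (hη : 0 < η) (x : ι → ℝ) : RR G η x ≤ η⁻¹ :=
  inv_anti₀ hη (by linarith [S_nonneg G x])

lemma SR_eq (G : MvPolynomial ι ℝ) {η : ℝ} (hη : 0 < η) (x : ι → ℝ) :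
    eval x (Gam G G) * RR G η x = 1 - η * RR G η x := by
  have : eval x (Gam G G) + η ≠ 0 := (add_pos_of_nonneg_of_pos (S_nonneg G x) hη).ne'
  unfold RR; field_simp; ring

lemma RR_cont (G : MvPolynomial ι ℝ) {η : ℝ} (hη : 0 < η) : Continuous (RR G η) := by
  unfold RR
  exact ((continuous_evalP _).add continuous_const).inv₀
    fun x => (add_pos_of_nonneg_of_pos (S_nonneg G x) hη).ne'

lemma RR_pow_int (G : MvPolynomial ι ℝ) {η : ℝ} (hη : 0 < η) (n : ℕ) :
    Integrable (fun x => RR G η x ^ n) (gaussPi ι) := by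
  refine Integrable.mono' (integrable_const (η⁻¹ ^ n))
    ((RR_cont G hη).pow n).aestronglyMeasurable (ae_of_all _ fun x => ?_)
  rw [Real.norm_of_nonneg (pow_nonneg (RR_pos G hη x).le _)]
  exact pow_le_pow_left₀ (RR_pos G hη x).le (RR_le G hη x) n

noncomputable def ph (G : MvPolynomial ι ℝ) (t : ℝ) (x : ι → ℝ) : ℂ :=
  Complex.exp ((t * eval x G : ℝ) * Complex.I)

lemma norm_ph (G : MvPolynomial ι ℝ) (t : ℝ) (x : ι → ℝ) : ‖ph G t x‖ = 1 :=
  Complex.norm_exp_ofReal_mul_I _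

lemma ph_cont (G : MvPolynomial ι ℝ) (t : ℝ) : Continuous (ph G t) := by
  unfold ph
  have := continuous_evalP G
  fun_prop

noncomputable def II (G : MvPolynomial ι ℝ) (η t : ℝ) (A : MvPolynomial ι ℝ) (b : ℕ) : ℂ :=
  ∫ x, ph G t x * ((eval x A * RR G η x ^ b : ℝ) : ℂ) ∂(gaussPi ι)

lemma II_int (G : MvPolynomial ι ℝ) {η : ℝ} (hη : 0 < η) (t : ℝ) (A : MvPolynomial ι ℝ) (b : ℕ) :
    Integrable (fun x => ph G t x * ((eval x A * RR G η x ^ b : ℝ) : ℂ)) (gaussPi ι) := by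
  refine Integrable.mono' ((integrable_evalP A).norm.mul_const (η⁻¹ ^ b)) ?_
    (ae_of_all _ fun x => ?_)
  · refine Continuous.aestronglyMeasurable ?_
    exact (ph_cont G t).mul (Complex.continuous_ofReal.comp
      ((continuous_evalP A).mul ((RR_cont G hη).pow b)))
  · rw [norm_mul, norm_ph, one_mul, Complex.norm_real, norm_mul,
      Real.norm_of_nonneg (pow_nonneg (RR_pos G hη x).le _)]
    exact mul_le_mul_of_nonneg_left (pow_le_pow_left₀ (RR_pos G hη x).le (RR_le G hη x) b)
      (norm_nonneg _)

lemma II_add (G : MvPolynomial ι ℝ) {η : ℝ} (hη : 0 < η) (t : ℝ) (A B : MvPolynomial ι ℝ) (b : ℕ) :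
    II G η t (A + B) b = II G η t A b + II G η t B b := by
  simp only [II]
  rw [← integral_add (II_int G hη t A b) (II_int G hη t B b)]
  congr 1; funext x; simp only [map_add]; push_cast; ring

lemma II_smul (G : MvPolynomial ι ℝ) {η : ℝ} (t : ℝ) (a : ℝ) (A : MvPolynomial ι ℝ)
    (b : ℕ) : II G η t (C a * A) b = a * II G η t A b := by
  simp only [II]
  rw [← integral_const_mul]
  congr 1; funext x; simp only [map_mul, eval_C]; push_cast; ring

lemma II_sum (G : MvPolynomial ι ℝ) {η : ℝ} (hη : 0 < η) (t : ℝ) (A : ι → MvPolynomial ι ℝ)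
    (b : ℕ) : II G η t (∑ i, A i) b = ∑ i, II G η t (A i) b := by
  simp only [II]
  rw [← integral_finsetSum _ fun i _ => II_int G hη t (A i) b]
  congr 1; funext x; simp only [map_sum, Finset.sum_mul]; push_cast
  rw [Finset.mul_sum]

lemma II_ibp1 (G : MvPolynomial ι ℝ) {η : ℝ} (hη : 0 < η) (t : ℝ) (A : MvPolynomial ι ℝ) (b : ℕ)
    (i : ι) : Complex.I * t * II G η t (pderiv i G * A) b + II G η t (pderiv i A) b
      - b * II G η t (A * pderiv i (Gam G G)) (b + 1) = II G η t (X i * A) b := by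
  classical
  set S := Gam G G with hS
  have j1 := II_int G hη t (pderiv i G * A) b
  have j2 := II_int G hη t (pderiv i A) b
  have j3 := II_int G hη t (A * pderiv i S) (b + 1)
  have key := ibp_gen i (fun x => ph G t x * ((eval x A * RR G η x ^ b : ℝ) : ℂ))
    (fun x => Complex.I * t * (ph G t x * ((eval x (pderiv i G * A) * RR G η x ^ b : ℝ) : ℂ))
      + ph G t x * ((eval x (pderiv i A) * RR G η x ^ b : ℝ) : ℂ)
      - b * (ph G t x * ((eval x (A * pderiv i S) * RR G η x ^ (b + 1) : ℝ) : ℂ)))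
    ?_ (II_int G hη t A b) ?_ ?_
  · simp only [II]
    rw [← integral_const_mul, ← integral_const_mul]
    have j12 : Integrable (fun x => Complex.I * t * (ph G t x *
        ((eval x (pderiv i G * A) * RR G η x ^ b : ℝ) : ℂ)) +
        ph G t x * ((eval x (pderiv i A) * RR G η x ^ b : ℝ) : ℂ)) (gaussPi ι) :=
      (j1.const_mul (Complex.I * t)).add j2
    rw [← integral_add (j1.const_mul _) j2]
    rw [← integral_sub j12 (j3.const_mul _)]
    refine key.trans ?_
    congr 1; funext x
    simp only [map_mul, eval_X, Complex.real_smul]; push_cast; ring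
  · intro x s
    have d1 := ((hasDerivAt_eval_update G x i s).const_mul t).ofReal_comp
    have d2 := (d1.mul_const Complex.I).cexp
    have hpos : eval (Function.update x i s) S + η ≠ 0 :=
      (add_pos_of_nonneg_of_pos (S_nonneg G _) hη).ne'
    have d3 := (((hasDerivAt_eval_update S x i s).add_const η).inv hpos).pow b
    have d4 := ((hasDerivAt_eval_update A x i s).mul d3).ofReal_comp
    have d5 := d2.mul d4
    refine (d5.congr_deriv ?_)
    have hR : ∀ y, RR G η y = (eval y S + η)⁻¹ := fun y => rfl
    simp only [ph, hR, map_mul]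
    rcases b with _ | b
    · simp; ring
    · simp only [Nat.add_sub_cancel, Pi.inv_apply, Pi.pow_apply, Pi.mul_apply, div_eq_mul_inv,
        ← inv_pow]
      generalize (eval (Function.update x i s) S + η)⁻¹ = r
      push_cast
      ring
  · exact ((j1.const_mul (Complex.I * t)).add j2).sub (j3.const_mul _)
  · refine (II_int G hη t (X i * A) b).congr (ae_of_all _ fun x => ?_)
    simp only [map_mul, eval_X, Complex.real_smul]; push_cast; ring

lemma II_ibp (G : MvPolynomial ι ℝ) {k : ℕ} (hG : Eig k G) {η : ℝ} (hη : 0 < η) (t : ℝ)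
    (A : MvPolynomial ι ℝ) (b : ℕ) :
    Complex.I * t * II G η t (Gam G G * A) b = k * II G η t (G * A) b - II G η t (Gam G A) b
      + b * II G η t (A * Gam G (Gam G G)) (b + 1) := by
  have h := Finset.sum_congr rfl fun i (_ : i ∈ Finset.univ) => II_ibp1 G hη t (pderiv i G * A) b i
  rw [Finset.sum_sub_distrib, Finset.sum_add_distrib, ← Finset.mul_sum, ← Finset.mul_sum,
    ← II_sum G hη, ← II_sum G hη, ← II_sum G hη, ← II_sum G hη] at h
  have e1 : ∑ i, pderiv i G * (pderiv i G * A) = Gam G G * A := by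
    simp only [Gam, Finset.sum_mul]; exact Finset.sum_congr rfl fun i _ => by ring
  have e2 : ∑ i, pderiv i (pderiv i G * A) = Gam G A + (∑ i, pderiv i (pderiv i G)) * A := by
    simp only [Gam, Finset.sum_mul, Derivation.leibniz, smul_eq_mul, ← Finset.sum_add_distrib]
    exact Finset.sum_congr rfl fun i _ => by ring
  have e3 : ∑ i, pderiv i G * A * pderiv i (Gam G G) = A * Gam G (Gam G G) := by
    generalize Gam G G = S
    simp only [Gam, Finset.mul_sum]; exact Finset.sum_congr rfl fun i _ => by ring
  have e4 : ∑ i, X i * (pderiv i G * A) = (∑ i, pderiv i (pderiv i G)) * A + C (k : ℝ) * (G * A) := by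
    have := hG.2
    rw [Lop, Finset.sum_sub_distrib, C_neg] at this
    have e : ∑ i, X i * (pderiv i G * A) = (∑ i, X i * pderiv i G) * A := by
      rw [Finset.sum_mul]; exact Finset.sum_congr rfl fun i _ => by ring
    rw [e]; linear_combination (-A) * this
  rw [e1, e2, e3, e4, II_add G hη, II_add G hη, II_smul] at h
  push_cast at h
  linear_combination h

lemma totalDegree_Gam_le (P Q : MvPolynomial ι ℝ) (D E : ℕ) (hP : P.totalDegree ≤ D)
    (hQ : Q.totalDegree ≤ E) : (Gam P Q).totalDegree ≤ D + E := by
  refine (totalDegree_finsetSum _ _).trans (Finset.sup_le fun i _ => ?_)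
  refine (totalDegree_mul _ _).trans ?_
  have h1 := totalDegree_pderiv_le i P D hP
  have h2 := totalDegree_pderiv_le i Q E hQ
  omega

def Bd (D : ℕ) (L : ℝ) (B : MvPolynomial ι ℝ) : Prop := B.totalDegree ≤ D ∧ EE (B ^ 2) ≤ L

noncomputable def mL (D : ℕ) (L : ℝ) (E : ℕ) (M : ℝ) : ℝ := (hc D * L ^ 2 + hc E * M ^ 2) / 2

noncomputable def gL (D : ℕ) (L : ℝ) (E : ℕ) (M : ℝ) : ℝ :=
  (hc D * (D * L) ^ 2 + hc E * (E * M) ^ 2) / 2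

lemma Bd.mul {D E : ℕ} {L M : ℝ} {P Q : MvPolynomial ι ℝ} (hP : Bd D L P) (hQ : Bd E M Q) :
    Bd (D + E) (mL D L E M) (P * Q) := by
  refine ⟨(totalDegree_mul _ _).trans (add_le_add hP.1 hQ.1), ?_⟩
  have h1 := hyper D P hP.1
  have h2 := hyper E Q hQ.1
  have h3 : EE ((P * Q) ^ 2) ≤ EE (C (1 / 2) * P ^ 4 + C (1 / 2) * Q ^ 4) := by
    refine EE_mono _ _ fun x => ?_
    simp only [map_mul, map_pow, map_add, eval_C]
    nlinarith [sq_nonneg (eval x P ^ 2 - eval x Q ^ 2)]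
  rw [EE_add, EE_C_mul, EE_C_mul] at h3
  have h4 := mul_le_mul_of_nonneg_left (pow_le_pow_left₀ (EE_sq_nonneg P) hP.2 2) (hc_nonneg D)
  have h5 := mul_le_mul_of_nonneg_left (pow_le_pow_left₀ (EE_sq_nonneg Q) hQ.2 2) (hc_nonneg E)
  unfold mL; linarith

lemma Gam_cs (P Q : MvPolynomial ι ℝ) (x : ι → ℝ) :
    eval x (Gam P Q) ^ 2 ≤ eval x (Gam P P) * eval x (Gam Q Q) := by
  rw [eval_Gam_self, eval_Gam_self]
  simp only [Gam, map_sum, map_mul]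
  exact Finset.sum_mul_sq_le_sq_mul_sq _ _ _

lemma Bd.gam {D E : ℕ} {L M : ℝ} {P Q : MvPolynomial ι ℝ} (hP : Bd D L P) (hQ : Bd E M Q) :
    Bd (D + E) (gL D L E M) (Gam P Q) := by
  refine ⟨totalDegree_Gam_le _ _ _ _ hP.1 hQ.1, ?_⟩
  have h1 := Gam_sq D P hP.1
  have h2 := Gam_sq E Q hQ.1
  have h3 : EE (Gam P Q ^ 2) ≤ EE (C (1 / 2) * Gam P P ^ 2 + C (1 / 2) * Gam Q Q ^ 2) := by
    refine EE_mono _ _ fun x => ?_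
    simp only [map_mul, map_pow, map_add, eval_C]
    nlinarith [sq_nonneg (eval x (Gam P P) - eval x (Gam Q Q)), Gam_cs P Q x]
  rw [EE_add, EE_C_mul, EE_C_mul] at h3
  have a1 : (D * EE (P ^ 2)) ^ 2 ≤ (D * L) ^ 2 :=
    pow_le_pow_left₀ (mul_nonneg (Nat.cast_nonneg _) (EE_sq_nonneg P))
      (mul_le_mul_of_nonneg_left hP.2 (Nat.cast_nonneg _)) 2
  have a2 : (E * EE (Q ^ 2)) ^ 2 ≤ (E * M) ^ 2 :=
    pow_le_pow_left₀ (mul_nonneg (Nat.cast_nonneg _) (EE_sq_nonneg Q))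
      (mul_le_mul_of_nonneg_left hQ.2 (Nat.cast_nonneg _)) 2
  have h4 := mul_le_mul_of_nonneg_left a1 (hc_nonneg D)
  have h5 := mul_le_mul_of_nonneg_left a2 (hc_nonneg E)
  unfold gL; linarith

lemma pow_le_one_add (r : ℝ) (hr : 0 ≤ r) (a b : ℕ) (hab : a ≤ b) : r ^ a ≤ 1 + r ^ b := by
  rcases le_total r 1 with h | h
  · have := pow_le_one₀ hr h (n := a)
    have := pow_nonneg hr b
    linarith
  · have := pow_le_pow_right₀ h hab
    linarith

lemma II_base (G : MvPolynomial ι ℝ) {η : ℝ} (hη : 0 < η) (t : ℝ) (Rm : ℕ) (M L : ℝ)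
    (hM : ∫ x, RR G η x ^ (2 * Rm) ∂(gaussPi ι) ≤ M) (B : MvPolynomial ι ℝ) (hB : EE (B ^ 2) ≤ L)
    (j b : ℕ) (hjb : j ≤ b) (hb : b ≤ j + Rm) :
    ‖II G η t (Gam G G ^ j * B) b‖ ≤ L + 1 + M := by
  have hi := RR_pow_int G hη (2 * Rm)
  have hsq : Integrable (fun x => eval x (B ^ 2)) (gaussPi ι) := integrable_evalP _
  have h1 : ‖II G η t (Gam G G ^ j * B) b‖ ≤
      ∫ x, (eval x (B ^ 2) + (1 + RR G η x ^ (2 * Rm))) ∂(gaussPi ι) := by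
    refine norm_integral_le_of_norm_le (hsq.add ((integrable_const 1).add hi))
      (ae_of_all _ fun x => ?_)
    have hR := RR_pos G hη x
    have hS := S_nonneg G x
    rw [norm_mul, norm_ph, one_mul, Complex.norm_real, Real.norm_eq_abs]
    obtain ⟨r, rfl⟩ := Nat.exists_eq_add_of_le hjb
    have e : eval x (Gam G G ^ j * B) * RR G η x ^ (j + r) =
        (eval x (Gam G G) * RR G η x) ^ j * (eval x B * RR G η x ^ r) := by
      simp only [map_mul, map_pow]; ring
    have hSR0 : 0 ≤ eval x (Gam G G) * RR G η x := by positivity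
    have hSR : eval x (Gam G G) * RR G η x ≤ 1 := by
      rw [SR_eq G hη]; nlinarith
    have h2 : |eval x B * RR G η x ^ r| ≤ eval x (B ^ 2) + (1 + RR G η x ^ (2 * Rm)) := by
      have h3 := pow_le_one_add _ hR.le (2 * r) (2 * Rm) (by omega)
      have h4 : |eval x B * RR G η x ^ r| ≤ eval x B ^ 2 + RR G η x ^ (2 * r) := by
        rw [mul_comm 2 r, pow_mul, abs_mul, abs_of_pos (pow_pos hR r), ← sq_abs (eval x B)]
        nlinarith [sq_nonneg (|eval x B| - RR G η x ^ r), sq_nonneg (|eval x B|),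
          sq_nonneg (RR G η x ^ r)]
      rw [map_pow]; linarith
    rw [e, abs_mul, abs_of_nonneg (pow_nonneg hSR0 j)]
    calc _ ≤ 1 * |eval x B * RR G η x ^ r| :=
          mul_le_mul_of_nonneg_right (pow_le_one₀ hSR0 hSR) (abs_nonneg _)
      _ ≤ _ := by rw [one_mul]; exact h2
  refine h1.trans ?_
  have hi2 : Integrable (fun x => 1 + RR G η x ^ (2 * Rm)) (gaussPi ι) :=
    (integrable_const 1).add hi
  rw [integral_add hsq hi2, integral_add (integrable_const 1) hi]
  simp only [EE] at hB
  simp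
  simp only [map_pow] at hB
  linarith

/-- Iterated integration by parts. -/
lemma II_decay (k : ℕ) (V M : ℝ) (Rm q : ℕ) : ∀ (D : ℕ) (L : ℝ) (j b : ℕ), 2 * q ≤ j → j ≤ b →
    b + 2 * q ≤ j + Rm → ∃ K : ℝ, ∀ (ι : Type) [Fintype ι] (G : MvPolynomial ι ℝ) (η t : ℝ),
      Eig k G → EE (G ^ 2) ≤ V → 0 < η → ∫ x, RR G η x ^ (2 * Rm) ∂(gaussPi ι) ≤ M →
      ∀ B : MvPolynomial ι ℝ, Bd D L B → |t| ^ q * ‖II G η t (Gam G G ^ j * B) b‖ ≤ K := by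
  induction q with
  | zero =>
    intro D L j b h1 h2 h3
    refine ⟨L + 1 + M, ?_⟩
    intro ι _ G η t hG hV hη hM B hB
    rw [pow_zero, one_mul]
    exact II_base G hη t Rm M L hM B hB.2 j b h2 (by omega)
  | succ q ih =>
    intro D L j b h1 h2 h3
    obtain ⟨j, rfl⟩ : ∃ i, j = i + 2 := ⟨j - 2, by omega⟩
    set LS := gL k V k V
    set L3 := mL D L (k + (k + k)) (gL k V (k + k) LS)
    obtain ⟨K1, hK1⟩ := ih (k + D) (mL k V D L) (j + 1) b (by omega) (by omega) (by omega)
    obtain ⟨K2, hK2⟩ := ih (k + D) (gL k V D L) (j + 1) b (by omega) (by omega) (by omega)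
    obtain ⟨K3, hK3⟩ := ih (D + (k + (k + k))) L3 j b (by omega) (by omega) (by omega)
    obtain ⟨K4, hK4⟩ := ih (D + (k + (k + k))) L3 (j + 1) (b + 1) (by omega) (by omega) (by omega)
    refine ⟨k * K1 + K2 + (j + 1) * K3 + b * K4, ?_⟩
    intro ι _ G η t hG hV hη hM B hB
    have bG : Bd k V G := ⟨hG.1, hV⟩
    have bS := bG.gam bG
    have b3 := hB.mul (bG.gam bS)
    have i1 := hK1 ι G η t hG hV hη hM _ (bG.mul hB)
    have i2 := hK2 ι G η t hG hV hη hM _ (bG.gam hB)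
    have i3 := hK3 ι G η t hG hV hη hM _ b3
    have i4 := hK4 ι G η t hG hV hη hM _ b3
    have e := II_ibp G hG hη t (Gam G G ^ (j + 1) * B) b
    have hpow : ∀ n : ℕ, Gam G (Gam G G ^ (n + 1)) =
        C ((n + 1 : ℕ) : ℝ) * (Gam G G ^ n * Gam G (Gam G G)) := by
      intro n
      induction n with
      | zero => simp
      | succ n ihn =>
        rw [pow_succ, Gam_mul, ihn]
        push_cast
        simp only [C_add, C_1]; ring
    have e0 : Gam G G * (Gam G G ^ (j + 1) * B) = Gam G G ^ (j + 2) * B := by ring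
    have e1 : G * (Gam G G ^ (j + 1) * B) = Gam G G ^ (j + 1) * (G * B) := by ring
    have e2 : Gam G (Gam G G ^ (j + 1) * B) = Gam G G ^ (j + 1) * Gam G B +
        C ((j + 1 : ℕ) : ℝ) * (Gam G G ^ j * (B * Gam G (Gam G G))) := by
      rw [Gam_mul, hpow]; ring
    have e3 : Gam G G ^ (j + 1) * B * Gam G (Gam G G) =
        Gam G G ^ (j + 1) * (B * Gam G (Gam G G)) := by ring
    rw [e0, e1, e2, e3, II_add G hη, II_smul] at e
    have hn : ‖Complex.I * t * II G η t (Gam G G ^ (j + 2) * B) b‖ =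
        |t| * ‖II G η t (Gam G G ^ (j + 2) * B) b‖ := by
      rw [norm_mul, norm_mul, Complex.norm_I, one_mul, Complex.norm_real, Real.norm_eq_abs]
    have hle : |t| * ‖II G η t (Gam G G ^ (j + 2) * B) b‖ ≤
        k * ‖II G η t (Gam G G ^ (j + 1) * (G * B)) b‖ +
        ‖II G η t (Gam G G ^ (j + 1) * Gam G B) b‖ +
        (j + 1) * ‖II G η t (Gam G G ^ j * (B * Gam G (Gam G G))) b‖ +
        b * ‖II G η t (Gam G G ^ (j + 1) * (B * Gam G (Gam G G))) (b + 1)‖ := by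
      rw [← hn, e]
      refine (norm_add_le _ _).trans ?_
      refine add_le_add ((norm_sub_le _ _).trans ?_) (by simp)
      rw [add_assoc]
      refine add_le_add (by simp) ((norm_add_le _ _).trans (add_le_add le_rfl ?_))
      rw [norm_mul, Complex.norm_real, Real.norm_of_nonneg (by positivity)]
      push_cast; exact le_rfl
    rw [pow_succ, mul_assoc]
    refine (mul_le_mul_of_nonneg_left hle (by positivity)).trans ?_
    have hk : (0 : ℝ) ≤ k := Nat.cast_nonneg _
    have hj : (0 : ℝ) ≤ (j : ℝ) + 1 := by positivity
    have hbb : (0 : ℝ) ≤ b := Nat.cast_nonneg _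
    have m1 := mul_le_mul_of_nonneg_left i1 hk
    have m3 := mul_le_mul_of_nonneg_left i3 hj
    have m4 := mul_le_mul_of_nonneg_left i4 hbb
    nlinarith

lemma fourier_decay (k : ℕ) (V M : ℝ) (Q : ℕ) : ∃ K : ℝ, ∀ (ι : Type) [Fintype ι]
    (G : MvPolynomial ι ℝ), Eig k G → EE (G ^ 2) ≤ V →
    (∀ η, 0 < η → ∫ x, RR G η x ^ (4 * Q) ∂(gaussPi ι) ≤ M) →
    ∀ t : ℝ, |t| ^ Q * ‖∫ x, ph G t x ∂(gaussPi ι)‖ ≤ K := by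
  obtain ⟨K, hK⟩ := II_decay k V M (2 * Q) Q 0 1 (2 * Q) (2 * Q) le_rfl le_rfl (by omega)
  refine ⟨K, fun ι _ G hG hV hM t => ?_⟩
  have main : ∀ η : ℝ, 0 < η → |t| ^ Q * ‖∫ x, ph G t x ∂(gaussPi ι)‖ ≤
      K + η * (|t| ^ Q * ((2 * Q : ℕ) * (1 + M))) := by
    intro η hη
    have hMη := hM η hη
    rw [show 4 * Q = 2 * (2 * Q) by ring] at hMη
    have h1 := hK ι G η t hG hV hη hMη 1 ⟨by simp, by simp [EE_one]⟩
    have iph : Integrable (ph G t) (gaussPi ι) :=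
      Integrable.mono' (integrable_const 1) (ph_cont G t).aestronglyMeasurable
        (ae_of_all _ fun x => (norm_ph G t x).le)
    have hi := RR_pow_int G hη (2 * (2 * Q))
    have h2 : ‖(∫ x, ph G t x ∂(gaussPi ι)) - II G η t (Gam G G ^ (2 * Q) * 1) (2 * Q)‖ ≤
        ∫ x, (η * (2 * Q : ℕ)) * (1 + RR G η x ^ (2 * (2 * Q))) ∂(gaussPi ι) := by
      rw [II, ← integral_sub iph (II_int G hη t _ _)]
      refine norm_integral_le_of_norm_le (((integrable_const 1).add hi).const_mul _)
        (ae_of_all _ fun x => ?_)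
      have hR := RR_pos G hη x
      have hS := S_nonneg G x
      have e : ph G t x - ph G t x * ((eval x (Gam G G ^ (2 * Q) * 1) * RR G η x ^ (2 * Q) : ℝ) : ℂ)
          = ph G t x * ((1 - (1 - η * RR G η x) ^ (2 * Q) : ℝ) : ℂ) := by
        rw [← SR_eq G hη]; simp only [map_mul, map_pow, map_one]; push_cast; ring
      have hSR0 : 0 ≤ 1 - η * RR G η x := by rw [← SR_eq G hη]; positivity
      have hSR : 1 - η * RR G η x ≤ 1 := by nlinarith
      rw [e, norm_mul, norm_ph, one_mul, Complex.norm_real, Real.norm_of_nonneg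
        (by linarith [pow_le_one₀ hSR0 hSR (n := 2 * Q)])]
      have hb := one_add_mul_le_pow (a := -(η * RR G η x)) (by linarith) (2 * Q)
      rw [← sub_eq_add_neg] at hb
      rcases Nat.eq_zero_or_pos Q with h0 | h0
      · subst h0; simp
      · have := pow_le_one_add _ hR.le 1 (2 * (2 * Q)) (by omega)
        rw [pow_one] at this
        have h4 : η * (2 * Q : ℕ) * RR G η x ≤ η * (2 * Q : ℕ) * (1 + RR G η x ^ (2 * (2 * Q))) :=
          mul_le_mul_of_nonneg_left this (by positivity)
        linarith
    rw [integral_const_mul, integral_add (integrable_const 1) hi] at h2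
    have h3 : ‖∫ x, ph G t x ∂(gaussPi ι)‖ ≤ ‖II G η t (Gam G G ^ (2 * Q) * 1) (2 * Q)‖ +
        η * (2 * Q : ℕ) * (1 + M) := by
      have := norm_sub_norm_le (∫ x, ph G t x ∂(gaussPi ι)) (II G η t (Gam G G ^ (2 * Q) * 1) (2 * Q))
      have h5 : η * (2 * Q : ℕ) * (∫ x : ι → ℝ, (1 : ℝ) ∂(gaussPi ι) +
          ∫ x, RR G η x ^ (2 * (2 * Q)) ∂(gaussPi ι)) ≤ η * (2 * Q : ℕ) * (1 + M) := by
        refine mul_le_mul_of_nonneg_left ?_ (by positivity)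
        simpa using hMη
      linarith
    have h6 := mul_le_mul_of_nonneg_left h3 (show (0 : ℝ) ≤ |t| ^ Q by positivity)
    linarith
  have ht : Tendsto (fun η : ℝ => K + η * (|t| ^ Q * ((2 * Q : ℕ) * (1 + M)))) (𝓝[>] 0)
      (𝓝 (K + 0 * (|t| ^ Q * ((2 * Q : ℕ) * (1 + M))))) := by
    refine Tendsto.mono_left ?_ nhdsWithin_le_nhds
    exact (continuous_const.add (continuous_id.mul continuous_const)).tendsto 0
  rw [zero_mul, add_zero] at ht
  refine ge_of_tendsto ht ?_
  filter_upwards [self_mem_nhdsWithin] with η hη using main η hη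

end Fourier

section Step

variable {ι : Type} [Fintype ι]

lemma small_ball1 (r : ℝ) (hr : 0 ≤ r) :
    gaussianReal 0 1 (Set.Icc (-r) r) ≤ ENNReal.ofReal r := by
  rw [gaussianReal_apply 0 one_ne_zero]
  have h1 : ∀ x, gaussianPDF 0 1 x ≤ ENNReal.ofReal (1 / 2) := by
    intro x
    rw [gaussianPDF]
    apply ENNReal.ofReal_le_ofReal
    rw [gaussianPDFReal]
    have h2 : (2 : ℝ) ≤ √(2 * Real.pi * (1 : NNReal)) := by
      apply Real.le_sqrt_of_sq_le
      have := Real.pi_gt_three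
      simp; linarith
    have h3 : (√(2 * Real.pi * (1 : NNReal)))⁻¹ ≤ 1 / 2 := by
      rw [one_div]; exact inv_anti₀ (by norm_num) h2
    have h4 : Real.exp (-(x - 0) ^ 2 / (2 * (1 : NNReal))) ≤ 1 := by
      rw [Real.exp_le_one_iff]
      exact div_nonpos_of_nonpos_of_nonneg (neg_nonpos.mpr (sq_nonneg _)) (by positivity)
    calc _ ≤ 1 / 2 * 1 := mul_le_mul h3 h4 (Real.exp_pos _).le (by norm_num)
      _ = _ := by norm_num
  calc _ ≤ ∫⁻ x in Set.Icc (-r) r, ENNReal.ofReal (1 / 2) := lintegral_mono fun x => h1 x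
    _ = ENNReal.ofReal (1 / 2) * ENNReal.ofReal (r - -r) := by
      rw [setLIntegral_const, Real.volume_Icc]
    _ = ENNReal.ofReal r := by
      rw [← ENNReal.ofReal_mul (by norm_num)]; congr 1; ring
    _ ≤ _ := le_rfl

lemma small_ball (p : ℕ) (r : ℝ) (hr : 0 ≤ r) :
    (gaussPi (Fin p)).real (Set.univ.pi fun _ => Set.Icc (-r) r) ≤ r ^ p := by
  rw [Measure.real, gaussPi, Measure.pi_pi]
  apply ENNReal.toReal_le_of_le_ofReal (by positivity)
  calc _ ≤ ∏ _i : Fin p, ENNReal.ofReal r := Finset.prod_le_prod' fun _ _ => small_ball1 r hr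
    _ = _ := by simp [ENNReal.ofReal_pow hr]

lemma gauss_fourier (p : ℕ) (t : ℝ) (g : Fin p → ℝ) :
    ∫ τ, Complex.exp ((t * ∑ j, τ j * g j : ℝ) * Complex.I) ∂(gaussPi (Fin p)) =
      ((Real.exp (-(t ^ 2 / 2) * ∑ j, g j ^ 2) : ℝ) : ℂ) := by
  have e1 : ∀ τ : Fin p → ℝ, Complex.exp ((t * ∑ j, τ j * g j : ℝ) * Complex.I) =
      ∏ j, Complex.exp ((t * g j : ℝ) * (τ j : ℂ) * Complex.I) := by
    intro τ
    rw [← Complex.exp_sum]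
    congr 1
    rw [Finset.mul_sum]
    push_cast
    rw [Finset.sum_mul]
    exact Finset.sum_congr rfl fun j _ => by ring
  simp only [e1]
  rw [gaussPi, integral_fintype_prod_eq_prod
    (f := fun j (s : ℝ) => Complex.exp ((t * g j : ℝ) * (s : ℂ) * Complex.I))]
  simp only [← charFun_apply_real, charFun_gaussianReal]
  rw [← Complex.exp_sum, Complex.ofReal_exp]
  congr 1
  push_cast
  rw [Finset.mul_sum]
  exact Finset.sum_congr rfl fun j _ => by ring

lemma E3 (F : MvPolynomial ι ℝ) (p Q : ℕ) (K : ℝ) (hK0 : 0 ≤ K) (N : Fin p → ι → ℝ)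
    (hK : ∀ u : Fin p → ℝ, ∑ j, u j ^ 2 = 1 → ∀ t : ℝ,
      |t| ^ Q * ‖∫ x, ph (dir (fun i => ∑ j, u j * N j i) F) t x ∂(gaussPi ι)‖ ≤ K)
    (σ : ℝ) (hσ : 0 < σ) :
    ∫ x, Real.exp (-(σ ^ 4 / 2) * ∑ j, eval x (dir (N j) F) ^ 2) ∂(gaussPi ι) ≤
      (1 / σ) ^ p + K * (1 / σ) ^ Q := by
  set f : (ι → ℝ) → (Fin p → ℝ) → ℂ := fun x τ =>
    Complex.exp ((σ ^ 2 * ∑ j, τ j * eval x (dir (N j) F) : ℝ) * Complex.I) with hf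
  have hnorm : ∀ x τ, ‖f x τ‖ = 1 := fun x τ => Complex.norm_exp_ofReal_mul_I _
  have hcont : Continuous (Function.uncurry f) := by
    have : ∀ j, Continuous (fun z : (ι → ℝ) × (Fin p → ℝ) => eval z.1 (dir (N j) F)) :=
      fun j => (continuous_evalP _).comp continuous_fst
    simp only [hf, Function.uncurry_def]
    fun_prop
  have hintg : Integrable (Function.uncurry f) ((gaussPi ι).prod (gaussPi (Fin p))) :=
    Integrable.mono' (integrable_const 1) hcont.aestronglyMeasurable
      (ae_of_all _ fun z => (hnorm z.1 z.2).le)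
  have e1 : ((∫ x, Real.exp (-(σ ^ 4 / 2) * ∑ j, eval x (dir (N j) F) ^ 2) ∂(gaussPi ι) : ℝ) : ℂ) =
      ∫ τ, ∫ x, f x τ ∂(gaussPi ι) ∂(gaussPi (Fin p)) := by
    rw [← integral_integral_swap hintg, ← integral_complex_ofReal]
    congr 1; funext x
    rw [hf]; simp only
    rw [gauss_fourier, ← pow_mul]
  set B : Set (Fin p → ℝ) := Set.univ.pi fun _ => Set.Icc (-(1 / σ)) (1 / σ) with hB
  have hBm : MeasurableSet B := MeasurableSet.univ_pi fun _ => measurableSet_Icc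
  have hbound : ∀ τ, ‖∫ x, f x τ ∂(gaussPi ι)‖ ≤ B.indicator (fun _ => (1 : ℝ)) τ + K * (1 / σ) ^ Q := by
    intro τ
    by_cases hτ : τ ∈ B
    · rw [Set.indicator_of_mem hτ]
      have : ‖∫ x, f x τ ∂(gaussPi ι)‖ ≤ 1 := by
        refine (norm_integral_le_of_norm_le (integrable_const 1)
          (ae_of_all _ fun x => (hnorm x τ).le)).trans ?_
        simp
      have h0 : 0 ≤ K * (1 / σ) ^ Q := by positivity
      linarith
    · rw [Set.indicator_of_notMem hτ, zero_add]
      obtain ⟨j, hj⟩ : ∃ j, 1 / σ < |τ j| := by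
        by_contra hcon
        push Not at hcon
        exact hτ fun j _ => abs_le.mp (hcon j)
      set ρ := √(∑ j, τ j ^ 2) with hρ
      have hs : τ j ^ 2 ≤ ∑ j, τ j ^ 2 :=
        Finset.single_le_sum (f := fun j => τ j ^ 2) (fun _ _ => sq_nonneg _) (Finset.mem_univ j)
      have hρ1 : 1 / σ < ρ := hj.trans_le (by rw [← Real.sqrt_sq_eq_abs]; exact Real.sqrt_le_sqrt hs)
      have hσ1 : 0 < 1 / σ := by positivity
      have hρ0 : 0 < ρ := hσ1.trans hρ1
      have hρ2 : ρ ^ 2 = ∑ j, τ j ^ 2 := Real.sq_sqrt (Finset.sum_nonneg fun _ _ => sq_nonneg _)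
      have h1 := hK (fun j => τ j / ρ) (by
        simp only [div_pow]; rw [← Finset.sum_div, ← hρ2]; exact div_self (by positivity)) (σ ^ 2 * ρ)
      have e2 : ∀ x, ph (dir (fun i => ∑ j, τ j / ρ * N j i) F) (σ ^ 2 * ρ) x = f x τ := by
        intro x
        simp only [ph, hf]
        congr 3
        rw [dir_comb]
        simp only [map_sum, map_mul, eval_C]
        rw [mul_assoc, Finset.mul_sum]
        congr 1
        exact Finset.sum_congr rfl fun j _ => by field_simp
      simp only [e2] at h1
      have h2 : σ ≤ σ ^ 2 * ρ := by
        have : σ ^ 2 * (1 / σ) ≤ σ ^ 2 * ρ := mul_le_mul_of_nonneg_left hρ1.le (by positivity)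
        have e : σ ^ 2 * (1 / σ) = σ := by field_simp
        linarith
      have h3 : σ ^ Q ≤ |σ ^ 2 * ρ| ^ Q :=
        pow_le_pow_left₀ hσ.le (h2.trans (le_abs_self _)) Q
      have h4 : σ ^ Q * ‖∫ x, f x τ ∂(gaussPi ι)‖ ≤ K :=
        (mul_le_mul_of_nonneg_right h3 (norm_nonneg _)).trans h1
      rw [one_div, inv_pow, ← div_eq_mul_inv, le_div_iff₀ (by positivity)]
      linarith
  have hI : Integrable (fun τ => B.indicator (fun _ => (1 : ℝ)) τ + K * (1 / σ) ^ Q) (gaussPi (Fin p)) :=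
    ((integrable_const 1).indicator hBm).add (integrable_const _)
  have h5 := norm_integral_le_of_norm_le hI (ae_of_all _ hbound)
  rw [← e1, Complex.norm_real, integral_add ((integrable_const 1).indicator hBm) (integrable_const _),
    integral_indicator hBm] at h5
  have h6 := small_ball p (1 / σ) (by positivity)
  refine (le_abs_self _).trans (h5.trans ?_)
  simp only [integral_const, smul_eq_mul, mul_one, measureReal_restrict_apply_univ, probReal_univ, one_mul]
  exact add_le_add h6 le_rfl

lemma int_N_sq (F : MvPolynomial ι ℝ) (p : ℕ) (x : ι → ℝ) :
    Integrable (fun N : Fin p → ι → ℝ => ∑ j, eval x (dir (N j) F) ^ 2) (nuP ι p) ∧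
    ∫ N, ∑ j, eval x (dir (N j) F) ^ 2 ∂(nuP ι p) = p * eval x (Gam F F) := by
  have hi : Integrable (fun h => eval x (dir h F) ^ 2) (gaussPi ι) := by
    have := integrable_evalP (lin (fun i => eval x (pderiv i F)) ^ 2)
    simp only [map_pow, eval_lin] at this
    refine this.congr (ae_of_all _ fun h => ?_)
    simp only [eval_dir, mul_comm]
  have key : ∀ j : Fin p, Integrable (fun N : Fin p → ι → ℝ => eval x (dir (N j) F) ^ 2) (nuP ι p) ∧
      ∫ N, eval x (dir (N j) F) ^ 2 ∂(nuP ι p) = eval x (Gam F F) := by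
    intro j
    have mp := mp_eval (ι := ι) p j
    refine ⟨mp.integrable_comp_of_integrable hi, ?_⟩
    have h3 : ∫ h, eval x (dir h F) ^ 2 ∂(gaussPi ι) = eval x (Gam F F) := by
      simp only [eval_dir, integral_lin_sq, eval_Gam_self]
    have := mp.map_eq
    rw [← this, integral_map mp.measurable.aemeasurable (by rw [this]; exact hi.1)] at h3
    exact h3
  refine ⟨integrable_finsetSum _ fun j _ => (key j).1, ?_⟩
  rw [integral_finsetSum _ fun j _ => (key j).1]
  simp [key]

lemma E1 (F : MvPolynomial ι ℝ) (p : ℕ) (x : ι → ℝ) (s : ℝ) (hs : 0 ≤ s)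
    (A : Set (Fin p → ι → ℝ)) (hA : MeasurableSet A) (hA2 : 3 / 4 ≤ (nuP ι p).real A) :
    Real.exp (-(2 * s * p * eval x (Gam F F))) ≤
      2 * ∫ N in A, Real.exp (-s * ∑ j, eval x (dir (N j) F) ^ 2) ∂(nuP ι p) := by
  obtain ⟨hi, he⟩ := int_N_sq F p x
  have hG := S_nonneg F x
  set a := 2 * s * p * eval x (Gam F F) with ha
  have ha0 : 0 ≤ a := by positivity
  have hexp : ∀ N : Fin p → ι → ℝ, Real.exp (-a) * ((1 + a) - s * ∑ j, eval x (dir (N j) F) ^ 2) ≤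
      Real.exp (-s * ∑ j, eval x (dir (N j) F) ^ 2) := by
    intro N
    have h1 := Real.add_one_le_exp (a - s * ∑ j, eval x (dir (N j) F) ^ 2)
    have h2 : Real.exp (-s * ∑ j, eval x (dir (N j) F) ^ 2) =
        Real.exp (-a) * Real.exp (a - s * ∑ j, eval x (dir (N j) F) ^ 2) := by
      rw [← Real.exp_add]; congr 1; ring
    rw [h2]
    exact mul_le_mul_of_nonneg_left (by linarith) (Real.exp_pos _).le
  have hcont : Continuous (fun N : Fin p → ι → ℝ => Real.exp (-s * ∑ j, eval x (dir (N j) F) ^ 2)) := by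
    simp only [eval_dir]; fun_prop
  have hintg : Integrable (fun N : Fin p → ι → ℝ =>
      Real.exp (-s * ∑ j, eval x (dir (N j) F) ^ 2)) (nuP ι p) := by
    refine Integrable.mono' (integrable_const 1) hcont.aestronglyMeasurable (ae_of_all _ fun N => ?_)
    rw [Real.norm_of_nonneg (Real.exp_pos _).le, Real.exp_le_one_iff]
    have : 0 ≤ ∑ j, eval x (dir (N j) F) ^ 2 := Finset.sum_nonneg fun _ _ => sq_nonneg _
    nlinarith
  have hi1 : Integrable (fun _ : Fin p → ι → ℝ => (1 + a)) ((nuP ι p).restrict A) := integrable_const _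
  have hi2 : Integrable (fun N : Fin p → ι → ℝ => s * ∑ j, eval x (dir (N j) F) ^ 2)
    ((nuP ι p).restrict A) := (hi.const_mul s).integrableOn
  have h3 := integral_mono ((hi1.sub hi2).const_mul (Real.exp (-a))) hintg.integrableOn hexp
  have h4 : ∫ N in A, s * ∑ j, eval x (dir (N j) F) ^ 2 ∂(nuP ι p) ≤ a / 2 := by
    have h5 := setIntegral_le_integral (s := A) (hi.const_mul s) (ae_of_all _ fun N =>
      mul_nonneg hs (Finset.sum_nonneg fun j _ => sq_nonneg (eval x (dir (N j) F))))
    rw [integral_const_mul (μ := nuP ι p), he] at h5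
    refine h5.trans (le_of_eq ?_)
    rw [ha]; ring
  have h6 : ∫ N in A, Real.exp (-a) * ((1 + a) - s * ∑ j, eval x (dir (N j) F) ^ 2) ∂(nuP ι p) =
      Real.exp (-a) * ((1 + a) * (nuP ι p).real A -
        ∫ N in A, s * ∑ j, eval x (dir (N j) F) ^ 2 ∂(nuP ι p)) := by
    rw [integral_const_mul, integral_sub hi1 hi2]
    simp [mul_comm]
  have h7 : ∫ N in A, Real.exp (-a) * ((1 + a) - s * ∑ j, eval x (dir (N j) F) ^ 2) ∂(nuP ι p) ≤
    ∫ N in A, Real.exp (-s * ∑ j, eval x (dir (N j) F) ^ 2) ∂(nuP ι p) := h3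
  rw [h6] at h7
  have h8 : Real.exp (-a) * (1 / 2) ≤ Real.exp (-a) * ((1 + a) * (nuP ι p).real A -
        ∫ N in A, s * ∑ j, eval x (dir (N j) F) ^ 2 ∂(nuP ι p)) := by
    refine mul_le_mul_of_nonneg_left ?_ (Real.exp_pos _).le
    nlinarith
  linarith

lemma E2 (F : MvPolynomial ι ℝ) (p : ℕ) (s : ℝ) (hs : 0 ≤ s) (b : ℝ) (hb : 0 ≤ b)
    (A : Set (Fin p → ι → ℝ)) (hA : MeasurableSet A) (hA2 : 3 / 4 ≤ (nuP ι p).real A)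
    (hN : ∀ N ∈ A, ∫ x, Real.exp (-s * ∑ j, eval x (dir (N j) F) ^ 2) ∂(gaussPi ι) ≤ b) :
    ∫ x, Real.exp (-(2 * s * p * eval x (Gam F F))) ∂(gaussPi ι) ≤ 2 * b := by
  set f : (ι → ℝ) → (Fin p → ι → ℝ) → ℝ := fun x N =>
    Real.exp (-s * ∑ j, eval x (dir (N j) F) ^ 2) with hf
  have hcont : Continuous (Function.uncurry f) := by
    have : ∀ i, Continuous (fun z : (ι → ℝ) × (Fin p → ι → ℝ) => eval z.1 (pderiv i F)) :=
      fun j => (continuous_evalP _).comp continuous_fst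
    simp only [hf, Function.uncurry_def, eval_dir]
    fun_prop
  have hle : ∀ x N, ‖f x N‖ ≤ 1 := by
    intro x N
    rw [Real.norm_of_nonneg (Real.exp_pos _).le, Real.exp_le_one_iff]
    have : 0 ≤ ∑ j, eval x (dir (N j) F) ^ 2 := Finset.sum_nonneg fun _ _ => sq_nonneg _
    nlinarith
  have hintg : Integrable (Function.uncurry f) ((gaussPi ι).prod ((nuP ι p).restrict A)) :=
    Integrable.mono' (integrable_const 1) hcont.aestronglyMeasurable
      (ae_of_all _ fun z => hle z.1 z.2)
  have hi0 : Integrable (fun x => Real.exp (-(2 * s * p * eval x (Gam F F)))) (gaussPi ι) := by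
    have := continuous_evalP (Gam F F)
    refine Integrable.mono' (integrable_const 1)
      (Continuous.aestronglyMeasurable (by fun_prop)) (ae_of_all _ fun x => ?_)
    rw [Real.norm_of_nonneg (Real.exp_pos _).le, Real.exp_le_one_iff]
    have := S_nonneg F x
    have : 0 ≤ 2 * s * p * eval x (Gam F F) := by positivity
    linarith
  have h1 := integral_mono hi0 (hintg.integral_prod_left.const_mul 2)
    (fun x => E1 F p x s hs A hA hA2)
  rw [integral_const_mul] at h1
  refine h1.trans (mul_le_mul_of_nonneg_left ?_ (by norm_num))
  have h2 := integral_integral_swap hintg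
  simp only [Function.uncurry] at h2 ⊢
  rw [h2]
  calc _ ≤ ∫ N in A, b ∂(nuP ι p) := by
        refine setIntegral_mono_on hintg.integral_prod_right (integrable_const _) hA hN
    _ = (nuP ι p).real A * b := by simp
    _ ≤ 1 * b := mul_le_mul_of_nonneg_right measureReal_le_one hb
    _ = b := one_mul b

end Step

section Ind

lemma neg_mom_of_laplace {ι : Type} [Fintype ι] (F : MvPolynomial ι ℝ) (C0 : ℝ) (hC0 : 0 ≤ C0) (q : ℕ)
    (h : ∀ n : ℕ, ∫ x, Real.exp (-(n * eval x (Gam F F))) ∂(gaussPi ι) ≤ C0 / ((n : ℝ) + 1) ^ (q + 2))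
    {η : ℝ} (hη : 0 < η) :
    ∫ x, RR F η x ^ q ∂(gaussPi ι) ≤
      Real.exp 1 * (C0 * ∑' n : ℕ, 1 / ((n : ℝ) + 1) ^ 2) := by
  set T := ⌊η⁻¹⌋₊ with hT
  have hpt : ∀ x, RR F η x ^ q ≤ Real.exp 1 *
      ∑ n ∈ Finset.range (T + 1), ((n : ℝ) + 1) ^ q * Real.exp (-(n * eval x (Gam F F))) := by
    intro x
    have h0 := RR_pos F hη x
    set n0 := ⌊RR F η x⌋₊ with hn0
    have h1 : n0 ≤ T := Nat.floor_mono (RR_le F hη x)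
    have h2 : RR F η x < n0 + 1 := Nat.lt_floor_add_one _
    have h3 : (n0 : ℝ) ≤ RR F η x := Nat.floor_le h0.le
    have hS := S_nonneg F x
    have h4 : (n0 : ℝ) * eval x (Gam F F) ≤ 1 := by
      have h5 : RR F η x * eval x (Gam F F) ≤ 1 := by
        rw [RR, inv_mul_le_iff₀ (by linarith)]; linarith
      exact (mul_le_mul_of_nonneg_right h3 hS).trans h5
    have h6 : 1 ≤ Real.exp 1 * Real.exp (-(n0 * eval x (Gam F F))) := by
      rw [← Real.exp_add]; exact Real.one_le_exp (by linarith)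
    have h7 : ((n0 : ℝ) + 1) ^ q * Real.exp (-(n0 * eval x (Gam F F))) ≤
        ∑ n ∈ Finset.range (T + 1), ((n : ℝ) + 1) ^ q * Real.exp (-(n * eval x (Gam F F))) :=
      Finset.single_le_sum (f := fun n : ℕ => ((n : ℝ) + 1) ^ q * Real.exp (-(n * eval x (Gam F F))))
        (fun n _ => by positivity) (Finset.mem_range.mpr (by omega))
    calc RR F η x ^ q ≤ ((n0 : ℝ) + 1) ^ q * 1 := by
          rw [mul_one]; exact pow_le_pow_left₀ h0.le h2.le q
      _ ≤ ((n0 : ℝ) + 1) ^ q * (Real.exp 1 * Real.exp (-(n0 * eval x (Gam F F)))) :=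
          mul_le_mul_of_nonneg_left h6 (by positivity)
      _ = Real.exp 1 * (((n0 : ℝ) + 1) ^ q * Real.exp (-(n0 * eval x (Gam F F)))) := by ring
      _ ≤ _ := mul_le_mul_of_nonneg_left h7 (Real.exp_pos _).le
  have hi : ∀ n : ℕ, Integrable (fun x => Real.exp (-(n * eval x (Gam F F)))) (gaussPi ι) := by
    intro n
    have := continuous_evalP (Gam F F)
    refine Integrable.mono' (integrable_const 1)
      (Continuous.aestronglyMeasurable (by fun_prop)) (ae_of_all _ fun x => ?_)
    rw [Real.norm_of_nonneg (Real.exp_pos _).le, Real.exp_le_one_iff]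
    have := S_nonneg F x
    have : 0 ≤ (n : ℝ) * eval x (Gam F F) := by positivity
    linarith
  have hi2 : ∀ n ∈ Finset.range (T + 1), Integrable (fun x => ((n : ℝ) + 1) ^ q *
      Real.exp (-(n * eval x (Gam F F)))) (gaussPi ι) := fun n _ => (hi n).const_mul _
  have hs : Summable (fun n : ℕ => 1 / ((n : ℝ) + 1) ^ 2) := by
    have := (summable_nat_add_iff 1).mpr (Real.summable_one_div_nat_pow.mpr (one_lt_two))
    simpa using this
  refine (integral_mono (RR_pow_int F hη q) ((integrable_finsetSum _ hi2).const_mul _) hpt).trans ?_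
  rw [integral_const_mul, integral_finsetSum _ hi2]
  refine mul_le_mul_of_nonneg_left ?_ (Real.exp_pos _).le
  calc _ ≤ ∑ n ∈ Finset.range (T + 1), C0 * (1 / ((n : ℝ) + 1) ^ 2) := by
        refine Finset.sum_le_sum fun n _ => ?_
        rw [integral_const_mul]
        have hn : (0 : ℝ) < (n : ℝ) + 1 := by positivity
        calc _ ≤ ((n : ℝ) + 1) ^ q * (C0 / ((n : ℝ) + 1) ^ (q + 2)) :=
              mul_le_mul_of_nonneg_left (h n) (by positivity)
          _ = _ := by rw [pow_add]; field_simp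
    _ = C0 * ∑ n ∈ Finset.range (T + 1), (1 / ((n : ℝ) + 1) ^ 2) := by rw [Finset.mul_sum]
    _ ≤ _ := mul_le_mul_of_nonneg_left (hs.sum_le_tsum _ fun n _ => by positivity) hC0

def NM (d : ℕ) : Prop := ∀ c : ℝ, 0 < c → ∀ q : ℕ, ∃ δ : ℝ, 0 < δ ∧ ∃ M : ℝ,
  ∀ (ι : Type) [Fintype ι] (F : MvPolynomial ι ℝ), Eig d F →
    EE ((Gam F F - C c) ^ 2) ≤ δ → ∀ η : ℝ, 0 < η → ∫ x, RR F η x ^ q ∂(gaussPi ι) ≤ M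

lemma NM_one : NM 1 := by
  intro c hc q
  refine ⟨c ^ 2 / 4, by positivity, (2 / c) ^ q, fun ι _ F hF hδ η hη => ?_⟩
  have hd : ∀ i, ∃ a : ℝ, pderiv i F = C a := by
    intro i
    have := totalDegree_pderiv_le i F 1 hF.1
    exact ⟨_, totalDegree_eq_zero_iff_eq_C.mp (Nat.le_zero.mp this)⟩
  choose a ha using hd
  have hG : Gam F F = C (∑ i, a i ^ 2) := by
    simp only [Gam, ha, map_sum, ← map_mul, pow_two]
  set b := ∑ i, a i ^ 2
  rw [hG, ← map_sub, ← map_pow, EE_C] at hδ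
  have hb : c / 2 ≤ b := by
    have := abs_le_of_sq_le_sq' (a := b - c) (b := c / 2) (by nlinarith) (by positivity)
    linarith [this.1]
  have : ∀ x, RR F η x ^ q ≤ (2 / c) ^ q := by
    intro x
    refine pow_le_pow_left₀ (RR_pos F hη x).le ?_ q
    rw [RR, hG, eval_C, ← inv_div]
    exact inv_anti₀ (by positivity) (by linarith)
  refine (integral_mono (RR_pow_int F hη q) (integrable_const _) this).trans ?_
  simp

lemma NM_succ (k : ℕ) (hk : 1 ≤ k) (ih : NM k) : NM (k + 1) := by
  intro c hc q
  have hk' : (1 : ℝ) ≤ k := by exact_mod_cast hk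
  obtain ⟨p, hp⟩ : ∃ p, p = 4 * (q + 2) := ⟨_, rfl⟩
  have hp1 : (1 : ℝ) ≤ p := by have : 1 ≤ p := by omega
                               exact_mod_cast this
  obtain ⟨δ', hδ', M', hM'⟩ := ih (k * c) (by positivity) (4 * p)
  obtain ⟨K', hK'⟩ := fourier_decay k (k * c + 1 + δ') M' p
  obtain ⟨K, hK0, hK⟩ : ∃ K : ℝ, 0 ≤ K ∧ K' ≤ K := ⟨|K'|, abs_nonneg _, le_abs_self _⟩
  set B := (p : ℝ) ^ 2 * (k : ℝ) ^ 2 + 1 with hB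
  have hB0 : 0 < B := by positivity
  refine ⟨δ' / (4 * B), by positivity,
    Real.exp 1 * (((2 * p) ^ (q + 2) * (1 + 2 * (1 + K))) * ∑' n : ℕ, 1 / ((n : ℝ) + 1) ^ 2),
    fun ι _ F hF hδ η hη => ?_⟩
  refine neg_mom_of_laplace F _ (by positivity) q ?_ hη
  set A : Set (Fin p → ι → ℝ) := {N | Sfun F (k * c) p N ≤ δ'} with hA
  have hAm : MeasurableSet A := measurableSet_le (Sfun_continuous F _ p).measurable measurable_const
  have hA2 : 3 / 4 ≤ (nuP ι p).real A := by
    obtain ⟨hi, hle⟩ := Sfun_int hF c p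
    have h1 : ∫ N, Sfun F (k * c) p N ∂nuP ι p ≤ δ' / 4 := by
      refine hle.trans ?_
      calc _ = (p ^ 2 * k ^ 2 : ℝ) * EE ((Gam F F - C c) ^ 2) := by ring
        _ ≤ B * (δ' / (4 * B)) :=
          mul_le_mul (by rw [hB]; linarith) hδ (EE_sq_nonneg _) hB0.le
        _ = δ' / 4 := by field_simp
    have h2 := mul_meas_ge_le_integral_of_nonneg
      (ae_of_all _ fun N => Sfun_nonneg F (k * c) p N) hi δ'
    have h3 : (nuP ι p).real {N | δ' ≤ Sfun F (k * c) p N} ≤ 1 / 4 := by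
      have : δ' * (nuP ι p).real {N | δ' ≤ Sfun F (k * c) p N} ≤ δ' * (1 / 4) := by linarith
      exact le_of_mul_le_mul_left this hδ'
    have h4 : (nuP ι p).real Aᶜ ≤ 1 / 4 := by
      refine (measureReal_mono ?_).trans h3
      intro N hN
      simp only [hA, Set.mem_compl_iff, Set.mem_setOf_eq, not_le] at hN ⊢
      exact hN.le
    rw [probReal_compl_eq_one_sub hAm] at h4
    linarith
  intro n
  by_cases hn : p ≤ n
  · have hn' : (p : ℝ) ≤ n := by exact_mod_cast hn
    have hn0 : (0 : ℝ) < n := by linarith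
    set σ := √√((n : ℝ) / p) with hσ
    have hσ0 : 0 < σ := Real.sqrt_pos.mpr (Real.sqrt_pos.mpr (by positivity))
    have hσ4 : σ ^ 4 = n / p := by
      calc σ ^ 4 = (σ ^ 2) ^ 2 := by ring
        _ = _ := by rw [hσ, Real.sq_sqrt (Real.sqrt_nonneg _), Real.sq_sqrt (by positivity)]
    have h1 : ∀ N ∈ A, ∫ x, Real.exp (-(σ ^ 4 / 2) * ∑ j, eval x (dir (N j) F) ^ 2) ∂(gaussPi ι) ≤
        (1 / σ) ^ p + K * (1 / σ) ^ p := by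
      intro N hN
      refine E3 F p p K hK0 N (fun u hu t => ?_) σ hσ0
      have g1 := (good_dir F (k * c) N u hu).trans hN
      have g2 := hF.dir (fun i => ∑ j, u j * N j i)
      set G := dir (fun i => ∑ j, u j * N j i) F
      refine (hK' ι G g2 ?_ (hM' ι G g2 g1) t).trans hK
      have g3 := g2.Gam_eq
      have g4 : EE (Gam G G) ≤ k * c + 1 + δ' := by
        have := EE_mono (Gam G G) (C (k * c + 1) + (Gam G G - C (k * c)) ^ 2) (fun x => by
          simp only [map_add, map_sub, map_pow, eval_C]
          nlinarith [sq_nonneg (eval x (Gam G G) - k * c - 1/2)])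
        rw [EE_add, EE_C] at this
        linarith
      have := EE_sq_nonneg G
      nlinarith
    have h2 := E2 F p (σ ^ 4 / 2) (by positivity) _ (by positivity) A hAm hA2 h1
    have e1 : ∀ x, 2 * (σ ^ 4 / 2) * p * eval x (Gam F F) = n * eval x (Gam F F) := by
      intro x; rw [hσ4]; field_simp
    simp only [e1] at h2
    refine h2.trans ?_
    have e2 : (1 / σ) ^ p = ((p : ℝ) / n) ^ (q + 2) := by
      conv_lhs => rw [hp, pow_mul, div_pow, hσ4]
      congr 1; simp
    have e3 : ((p : ℝ) / n) ^ (q + 2) ≤ (2 * p / (n + 1)) ^ (q + 2) := by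
      refine pow_le_pow_left₀ (by positivity) ?_ _
      rw [div_le_div_iff₀ hn0 (by positivity)]
      nlinarith
    rw [e2]
    rw [div_pow, div_pow] at e3
    calc _ = (2 * (1 + K)) * ((p : ℝ) / n) ^ (q + 2) := by ring
      _ ≤ (1 + 2 * (1 + K)) * ((2 * p) ^ (q + 2) / (n + 1) ^ (q + 2)) := by
        rw [div_pow]
        exact mul_le_mul (by linarith) e3 (by positivity) (by positivity)
      _ = _ := by ring
  · have hn' : (n : ℝ) + 1 ≤ p := by exact_mod_cast Nat.lt_of_not_le hn
    have h1 : ∫ x, Real.exp (-(n * eval x (Gam F F))) ∂(gaussPi ι) ≤ 1 := by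
      have := norm_integral_le_of_norm_le (μ := gaussPi ι)
        (f := fun x => Real.exp (-(n * eval x (Gam F F)))) (integrable_const (1 : ℝ))
        (ae_of_all _ fun x => by
          rw [Real.norm_of_nonneg (Real.exp_pos _).le, Real.exp_le_one_iff]
          have := S_nonneg F x
          have : 0 ≤ (n : ℝ) * eval x (Gam F F) := by positivity
          linarith)
      refine (le_abs_self _).trans (this.trans ?_)
      simp
    refine h1.trans ?_
    rw [le_div_iff₀ (by positivity), one_mul]
    calc ((n : ℝ) + 1) ^ (q + 2) ≤ (2 * p) ^ (q + 2) * 1 := by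
          rw [mul_one]; exact pow_le_pow_left₀ (by positivity) (by linarith) _
      _ ≤ _ := mul_le_mul_of_nonneg_left (by linarith) (by positivity)

lemma NM_all (d : ℕ) : NM (d + 1) := by
  induction d with
  | zero => exact NM_one
  | succ d ih => exact NM_succ (d + 1) (by omega) ih

end Ind

section Herm

variable {ι : Type} [Fintype ι]

lemma hermite_ode (n : ℕ) : Polynomial.derivative (Polynomial.derivative (Polynomial.hermite n)) =
    Polynomial.X * Polynomial.derivative (Polynomial.hermite n) - (n : Polynomial ℤ) * Polynomial.hermite n := by
  induction n with
  | zero => simp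
  | succ n ih =>
    have h1 : Polynomial.derivative (Polynomial.hermite (n + 1)) =
        ((n : Polynomial ℤ) + 1) * Polynomial.hermite n := by
      rw [Polynomial.hermite_succ, Polynomial.derivative_sub, Polynomial.derivative_mul, ih]
      simp only [Polynomial.derivative_X]
      ring
    rw [h1, Polynomial.derivative_mul, Polynomial.hermite_succ]
    simp only [Polynomial.derivative_add, Polynomial.derivative_natCast, Polynomial.derivative_one]
    push_cast
    ring

lemma pderiv_aeval_X (i j : ι) (h : Polynomial ℤ) :
    pderiv j (Polynomial.aeval (X i : MvPolynomial ι ℝ) h) =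
      pderiv j (X i) * Polynomial.aeval (X i : MvPolynomial ι ℝ) (Polynomial.derivative h) := by
  have := Derivation.map_aeval (pderiv j : Derivation ℝ (MvPolynomial ι ℝ) (MvPolynomial ι ℝ))
    (h.map (algebraMap ℤ ℝ)) (X i)
  rw [Polynomial.aeval_map_algebraMap, Polynomial.derivative_map,
    Polynomial.aeval_map_algebraMap, smul_eq_mul] at this
  rw [this, mul_comm]

lemma Lop_aeval (i : ι) (n : ℕ) :
    Lop (Polynomial.aeval (X i : MvPolynomial ι ℝ) (Polynomial.hermite n)) =
      C (-(n : ℝ)) * Polynomial.aeval (X i : MvPolynomial ι ℝ) (Polynomial.hermite n) := by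
  classical
  rw [Lop, Finset.sum_eq_single i]
  · rw [pderiv_aeval_X, pderiv_X_self, one_mul, pderiv_aeval_X, pderiv_X_self, one_mul, hermite_ode]
    simp only [map_sub, map_mul, Polynomial.aeval_X, map_natCast, map_neg]
    ring
  · intro j _ hj
    rw [pderiv_aeval_X, pderiv_X_of_ne (Ne.symm hj)]
    simp
  · simp

lemma prod_herm_aux [DecidableEq ι] (k : ι → ℕ) (s : Finset ι) :
    (∀ j, j ∉ s → pderiv j (∏ i ∈ s, Polynomial.aeval (X i : MvPolynomial ι ℝ) (Polynomial.hermite (k i))) = 0) ∧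
    Lop (∏ i ∈ s, Polynomial.aeval (X i : MvPolynomial ι ℝ) (Polynomial.hermite (k i))) =
      C (-((∑ i ∈ s, k i : ℕ) : ℝ)) *
        ∏ i ∈ s, Polynomial.aeval (X i : MvPolynomial ι ℝ) (Polynomial.hermite (k i)) := by
  induction s using Finset.induction_on with
  | empty => 
    refine ⟨by simp, ?_⟩
    have := Lop_C (ι := ι) 1
    simpa using this
  | insert a s ha ih =>
    obtain ⟨ih1, ih2⟩ := ih
    rw [Finset.prod_insert ha, Finset.sum_insert ha]
    refine ⟨fun j hj => ?_, ?_⟩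
    · rw [Finset.mem_insert, not_or] at hj
      rw [Derivation.leibniz, ih1 j hj.2, pderiv_aeval_X, pderiv_X_of_ne (Ne.symm hj.1)]
      simp
    · have hG : Gam (Polynomial.aeval (X a : MvPolynomial ι ℝ) (Polynomial.hermite (k a)))
          (∏ i ∈ s, Polynomial.aeval (X i : MvPolynomial ι ℝ) (Polynomial.hermite (k i))) = 0 := by
        refine Finset.sum_eq_zero fun j _ => ?_
        by_cases hj : j = a
        · rw [hj, ih1 a ha, mul_zero]
        · rw [pderiv_aeval_X, pderiv_X_of_ne (Ne.symm hj)]; simp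
      rw [Lop_mul, hG, ih2, Lop_aeval]
      push_cast
      simp only [map_neg, map_add]
      ring

lemma totalDegree_aeval_X (i : ι) (h : Polynomial ℤ) :
    (Polynomial.aeval (X i : MvPolynomial ι ℝ) h).totalDegree ≤ h.natDegree := by
  rw [Polynomial.aeval_eq_sum_range]
  refine totalDegree_finsetSum_le fun n hn => ?_
  refine (totalDegree_smul_le _ _).trans ?_
  rw [totalDegree_X_pow]
  exact Nat.lt_succ_iff.mp (Finset.mem_range.mp hn)

lemma Eig_of_chaos {K m : ℕ} {P : MvPolynomial (Fin K) ℝ} (hP : P ∈ chaos K m) : Eig m P := by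
  classical
  induction hP using Submodule.span_induction with
  | mem P hP =>
    obtain ⟨k, hk, rfl⟩ := hP
    refine ⟨?_, ?_⟩
    · refine (totalDegree_finsetProd _ _).trans ?_
      rw [← hk]
      refine Finset.sum_le_sum fun i _ => (totalDegree_aeval_X _ _).trans ?_
      rw [Polynomial.natDegree_hermite]
    · have := (prod_herm_aux k Finset.univ).2
      rw [hk] at this
      exact this
  | zero => exact ⟨by simp, by simp [Lop_zero]⟩
  | add P Q _ _ h1 h2 =>
    refine ⟨(totalDegree_add _ _).trans (max_le h1.1 h2.1), ?_⟩
    rw [Lop_add, h1.2, h2.2, mul_add]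
  | smul a P _ h =>
    refine ⟨(totalDegree_smul_le _ _).trans h.1, ?_⟩
    rw [smul_eq_C_mul, Lop_C_mul, h.2]; ring

end Herm

section Moments

lemma gauss_pow_int (j : ℕ) : Integrable (fun y : ℝ => y ^ j) (gaussianReal 0 1) := by
  rcases Nat.eq_zero_or_pos j with h | h
  · simp [h]
  · have := (memLp_id_gaussianReal (μ := 0) (v := 1) j).integrable_norm_pow (by omega)
    refine this.mono (by fun_prop) ?_
    exact ae_of_all _ fun x => by simp

lemma gauss_two : ∫ y : ℝ, y ^ 2 ∂(gaussianReal 0 1) = 1 := by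
  have := stein_gaussianReal (fun y : ℝ => y) (fun _ => 1) (fun s => hasDerivAt_id s)
    (by simpa using gauss_pow_int 1) (integrable_const _)
    (by simpa [pow_two] using gauss_pow_int 2)
  simp only [smul_eq_mul, ← pow_two] at this
  rw [← this]; simp

lemma gauss_four : ∫ y : ℝ, y ^ 4 ∂(gaussianReal 0 1) = 3 := by
  have e : ∀ s : ℝ, s • s ^ 3 = s ^ 4 := fun s => by rw [smul_eq_mul]; ring
  have := stein_gaussianReal (fun y : ℝ => y ^ 3) (fun y => 3 * y ^ 2)
    (fun s => by simpa using hasDerivAt_pow 3 s)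
    (gauss_pow_int 3) ((gauss_pow_int 2).const_mul 3)
    (by simp only [e]; exact gauss_pow_int 4)
  simp only [e] at this
  rw [← this, integral_const_mul, gauss_two]; norm_num

/-- truncation as a bounded continuous function -/
noncomputable def trunc (φ : ℝ → ℝ) (hφ : Continuous φ) (hφ0 : ∀ y, 0 ≤ φ y) (A : ℝ) (hA : 0 ≤ A) :
    BoundedContinuousFunction ℝ ℝ :=
  BoundedContinuousFunction.ofNormedAddCommGroup (fun y => min (φ y) A) (by fun_prop) A (fun y => by
    rw [Real.norm_of_nonneg (le_min (hφ0 y) hA)]; exact min_le_right _ _)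

lemma trunc_err (φ : ℝ → ℝ) (hφ : Continuous φ) (hφ0 : ∀ y, 0 ≤ φ y) (A : ℝ) (hA : 0 < A)
    (μ : Measure ℝ) [IsProbabilityMeasure μ] (h1 : Integrable φ μ)
    (h2 : Integrable (fun y => φ y ^ 2) μ) (B : ℝ) (hB : ∫ y, φ y ^ 2 ∂μ ≤ B) :
    |∫ y, φ y ∂μ - ∫ y, trunc φ hφ hφ0 A hA.le y ∂μ| ≤ B / A := by
  have hi : Integrable (trunc φ hφ hφ0 A hA.le) μ := (trunc φ hφ hφ0 A hA.le).integrable μ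
  have e : ∀ y, trunc φ hφ hφ0 A hA.le y = min (φ y) A := fun y => rfl
  rw [← integral_sub h1 hi]
  have hb : ∀ y, ‖φ y - trunc φ hφ hφ0 A hA.le y‖ ≤ A⁻¹ * φ y ^ 2 := by
    intro y
    rw [e, Real.norm_of_nonneg (by linarith [min_le_left (φ y) A])]
    have := hφ0 y
    rcases le_total (φ y) A with h | h
    · rw [min_eq_left h]; simp; positivity
    · rw [min_eq_right h, inv_mul_eq_div, le_div_iff₀ hA]; nlinarith
  have := norm_integral_le_of_norm_le (h2.const_mul A⁻¹) (ae_of_all _ hb)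
  rw [integral_const_mul] at this
  refine this.trans ?_
  rw [inv_mul_eq_div]
  gcongr

lemma tendsto_mom (φ : ℝ → ℝ) (hφ : Continuous φ) (hφ0 : ∀ y, 0 ≤ φ y)
    (μs : ℕ → Measure ℝ) (μ : Measure ℝ) [∀ n, IsProbabilityMeasure (μs n)] [IsProbabilityMeasure μ]
    (hlaw : TendstoInLaw μs μ) (h1 : ∀ n, Integrable φ (μs n)) (h1' : Integrable φ μ)
    (h2 : ∀ n, Integrable (fun y => φ y ^ 2) (μs n)) (h2' : Integrable (fun y => φ y ^ 2) μ)
    (B : ℝ) (hB : ∀ᶠ n in atTop, ∫ y, φ y ^ 2 ∂(μs n) ≤ B) :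
    Tendsto (fun n => ∫ y, φ y ∂(μs n)) atTop (𝓝 (∫ y, φ y ∂μ)) := by
  rw [Metric.tendsto_atTop']
  intro ε hε
  set B' := |B| + ∫ y, φ y ^ 2 ∂μ + 1 with hB'
  have hpos : 0 ≤ ∫ y, φ y ^ 2 ∂μ := integral_nonneg fun y => sq_nonneg _
  have hB0 : 0 < B' := by have := abs_nonneg B; linarith
  have hA : 0 < 3 * B' / ε := by positivity
  have hq : B' / (3 * B' / ε) = ε / 3 := by field_simp
  have hl := hlaw (trunc φ hφ hφ0 _ hA.le)
  rw [Metric.tendsto_nhds] at hl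
  have := (hl (ε / 3) (by positivity)).and hB
  rw [eventually_atTop] at this
  obtain ⟨n0, hn0⟩ := this
  refine ⟨n0, fun n hn => ?_⟩
  obtain ⟨g1, g2⟩ := hn0 n (le_of_lt hn)
  have t1 := trunc_err φ hφ hφ0 _ hA (μs n) (h1 n) (h2 n) B' (by
    have := le_abs_self B; linarith)
  have t2 := trunc_err φ hφ hφ0 _ hA μ h1' h2' B' (by
    have := abs_nonneg B; linarith)
  rw [hq] at t1 t2
  rw [Real.dist_eq] at g1 ⊢
  rw [abs_le] at t1 t2
  rw [abs_lt] at g1 ⊢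
  constructor <;> linarith [t1.1, t1.2, t2.1, t2.2, g1.1, g1.2]

lemma second_bdd (μs : ℕ → Measure ℝ) [∀ n, IsProbabilityMeasure (μs n)]
    (hlaw : TendstoInLaw μs (gaussianReal 0 1))
    (hI : ∀ n j, Integrable (fun y : ℝ => y ^ j) (μs n)) (H : ℝ) (hH : 0 < H)
    (h4 : ∀ n, ∫ y, y ^ 4 ∂(μs n) ≤ H * (∫ y, y ^ 2 ∂(μs n)) ^ 2) :
    ∀ᶠ n in atTop, ∫ y, y ^ 2 ∂(μs n) ≤ 16 * H := by
  have hA : (0 : ℝ) < 8 * H := by positivity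
  set A := 8 * H with hAd
  have hc : Continuous (fun y : ℝ => y ^ 2 / A) := by fun_prop
  set ψ := trunc (fun y : ℝ => y ^ 2 / A) hc (fun y => by positivity) 1 zero_le_one with hψ
  have eψ : ∀ y, ψ y = min (y ^ 2 / A) 1 := fun y => rfl
  have hl := hlaw ψ
  have hg : ∫ y, ψ y ∂(gaussianReal 0 1) ≤ 1 / A := by
    have := integral_mono (ψ.integrable (gaussianReal 0 1)) ((gauss_pow_int 2).div_const A)
      (fun y => min_le_left _ _)
    refine this.trans ?_
    rw [integral_div, gauss_two]
  have hev := hl.eventually_lt_const (u := 2 / A) (lt_of_le_of_lt hg (by gcongr; norm_num))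
  filter_upwards [hev] with n hn
  set v := ∫ y, y ^ 2 ∂(μs n) with hv
  have hv0 : 0 ≤ v := integral_nonneg fun y => sq_nonneg _
  rcases hv0.eq_or_lt with h0 | h0
  · rw [← h0]; positivity
  have hpt : ∀ y : ℝ, y ^ 2 ≤ A + (y ^ 4 / (4 * H * v) + H * v * ψ y) := by
    intro y
    have p1 : 0 ≤ ψ y := by rw [eψ]; exact le_min (by positivity) zero_le_one
    have hs := sq_nonneg y
    rcases le_total (y ^ 2) A with h | h
    · have : 0 ≤ y ^ 4 / (4 * H * v) + H * v * ψ y := by positivity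
      linarith
    · have e1 : ψ y = 1 := by
        rw [eψ, min_eq_right]; rwa [le_div_iff₀ hA, one_mul]
      rw [e1]
      have : y ^ 4 / (4 * H * v) + H * v * 1 - y ^ 2 = (y ^ 2 - 2 * (H * v)) ^ 2 / (4 * H * v) := by
        field_simp; ring
      have : 0 ≤ (y ^ 2 - 2 * (H * v)) ^ 2 / (4 * H * v) := by positivity
      linarith
  have i1 : Integrable (fun y : ℝ => y ^ 4 / (4 * H * v)) (μs n) := (hI n 4).div_const _
  have i2 : Integrable (fun y : ℝ => H * v * ψ y) (μs n) := (ψ.integrable (μs n)).const_mul _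
  have i12 : Integrable (fun y : ℝ => y ^ 4 / (4 * H * v) + H * v * ψ y) (μs n) := i1.add i2
  have hm := integral_mono (hI n 2) ((integrable_const A).add i12) hpt
  have e3 : ∫ y, A + (y ^ 4 / (4 * H * v) + H * v * ψ y) ∂(μs n) =
      A + ((∫ y, y ^ 4 ∂(μs n)) / (4 * H * v) + H * v * ∫ y, ψ y ∂(μs n)) := by
    rw [integral_add (integrable_const A) i12, integral_add i1 i2, integral_div, integral_const_mul (H * v), integral_const, probReal_univ, one_smul]
  have hm' : v ≤ A + ((∫ y, y ^ 4 ∂(μs n)) / (4 * H * v) + H * v * ∫ y, ψ y ∂(μs n)) := by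
    rw [← e3]; exact hm
  have b1 : (∫ y, y ^ 4 ∂(μs n)) / (4 * H * v) ≤ v / 4 := by
    rw [div_le_iff₀ (by positivity)]
    refine (h4 n).trans (le_of_eq ?_)
    ring
  have b2 : H * v * ∫ y, ψ y ∂(μs n) ≤ v / 4 := by
    calc _ ≤ H * v * (2 / A) := mul_le_mul_of_nonneg_left hn.le (by positivity)
      _ = v / 4 := by rw [hAd]; field_simp; norm_num
  linarith

lemma mom_conv (μs : ℕ → Measure ℝ) [∀ n, IsProbabilityMeasure (μs n)]
    (hlaw : TendstoInLaw μs (gaussianReal 0 1))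
    (hI : ∀ n j, Integrable (fun y : ℝ => y ^ j) (μs n)) (H : ℝ) (hH : 0 < H)
    (h4 : ∀ n, ∫ y, y ^ 4 ∂(μs n) ≤ H * (∫ y, y ^ 2 ∂(μs n)) ^ 2)
    (h8 : ∀ n, ∫ y, y ^ 8 ∂(μs n) ≤ H * (∫ y, y ^ 4 ∂(μs n)) ^ 2) :
    Tendsto (fun n => ∫ y, y ^ 2 ∂(μs n)) atTop (𝓝 1) ∧
    Tendsto (fun n => ∫ y, y ^ 4 ∂(μs n)) atTop (𝓝 3) := by
  have e2 : ∀ y : ℝ, (y ^ 2) ^ 2 = y ^ 4 := fun y => by ring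
  have e4 : ∀ y : ℝ, (y ^ 4) ^ 2 = y ^ 8 := fun y => by ring
  have b4 : ∀ᶠ n in atTop, ∫ y, y ^ 4 ∂(μs n) ≤ H * (16 * H) ^ 2 := by
    filter_upwards [second_bdd μs hlaw hI H hH h4] with n hn
    refine (h4 n).trans (mul_le_mul_of_nonneg_left ?_ hH.le)
    exact pow_le_pow_left₀ (integral_nonneg fun y => sq_nonneg _) hn 2
  have b8 : ∀ᶠ n in atTop, ∫ y, y ^ 8 ∂(μs n) ≤ H * (H * (16 * H) ^ 2) ^ 2 := by
    filter_upwards [b4] with n hn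
    refine (h8 n).trans (mul_le_mul_of_nonneg_left ?_ hH.le)
    exact pow_le_pow_left₀ (integral_nonneg fun y => by positivity) hn 2
  constructor
  · rw [← gauss_two]
    refine tendsto_mom (fun y => y ^ 2) (by fun_prop) (fun y => sq_nonneg y) μs _ hlaw (fun n => hI n 2)
      (gauss_pow_int 2) ?_ ?_ (H * (16 * H) ^ 2) ?_
    · simp only [e2]; exact fun n => hI n 4
    · simp only [e2]; exact gauss_pow_int 4
    · simpa only [e2] using b4
  · rw [← gauss_four]
    refine tendsto_mom (fun y => y ^ 4) (by fun_prop) (fun y => by positivity) μs _ hlaw (fun n => hI n 4)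
      (gauss_pow_int 4) ?_ ?_ (H * (H * (16 * H) ^ 2) ^ 2) ?_
    · simp only [e4]; exact fun n => hI n 8
    · simp only [e4]; exact gauss_pow_int 8
    · simpa only [e4] using b8

end Moments

section Final

lemma inv_moment_le {ι : Type} [Fintype ι] (F : MvPolynomial ι ℝ) (q : ℕ) (M : ℝ)
    (h : ∀ η : ℝ, 0 < η → ∫ x, RR F η x ^ q ∂(gaussPi ι) ≤ M) :
    ∫⁻ x, (ENNReal.ofReal (sqField F x) ^ q)⁻¹ ∂gaussPi ι ≤ ENNReal.ofReal M := by
  have e : ∀ x, sqField F x = eval x (Gam F F) := fun x => by rw [eval_Gam_self]; rfl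
  simp only [e]
  set η : ℕ → ℝ := fun j => 1 / ((j : ℝ) + 1) with hη
  have hη0 : ∀ j, 0 < η j := fun j => by simp only [hη]; positivity
  have hηt : Tendsto η atTop (𝓝 0) := tendsto_one_div_add_atTop_nhds_zero_nat
  have hl : ∀ x, Tendsto (fun j => ENNReal.ofReal (RR F (η j) x ^ q)) atTop
      (𝓝 ((ENNReal.ofReal (eval x (Gam F F)) ^ q)⁻¹)) := by
    intro x
    have e1 : ∀ j, ENNReal.ofReal (RR F (η j) x ^ q) =
        (ENNReal.ofReal (eval x (Gam F F) + η j) ^ q)⁻¹ := by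
      intro j
      have h0 : 0 < eval x (Gam F F) + η j := by have := S_nonneg F x; have := hη0 j; linarith
      rw [RR, ENNReal.ofReal_pow (by positivity), ENNReal.ofReal_inv_of_pos h0, ENNReal.inv_pow]
    simp only [e1]
    have t1 : Tendsto (fun j => eval x (Gam F F) + η j) atTop (𝓝 (eval x (Gam F F) + 0)) :=
      tendsto_const_nhds.add hηt
    rw [add_zero] at t1
    exact ((ENNReal.continuous_pow q).tendsto _ |>.comp (ENNReal.tendsto_ofReal t1)).inv
  have hb : ∀ j, ∫⁻ x, ENNReal.ofReal (RR F (η j) x ^ q) ∂gaussPi ι ≤ ENNReal.ofReal M := by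
    intro j
    rw [← ofReal_integral_eq_lintegral_ofReal (RR_pow_int F (hη0 j) q)
      (ae_of_all _ fun x => pow_nonneg (RR_pos F (hη0 j) x).le q)]
    exact ENNReal.ofReal_le_ofReal (h _ (hη0 j))
  calc _ = ∫⁻ x, liminf (fun j => ENNReal.ofReal (RR F (η j) x ^ q)) atTop ∂gaussPi ι :=
        lintegral_congr fun x => (hl x).liminf_eq.symm
    _ ≤ liminf (fun j => ∫⁻ x, ENNReal.ofReal (RR F (η j) x ^ q) ∂gaussPi ι) atTop :=
        lintegral_liminf_le fun j =>
          (((RR_cont F (hη0 j)).pow q).measurable).ennreal_ofReal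
    _ ≤ liminf (fun _ : ℕ => ENNReal.ofReal M) atTop :=
        liminf_le_liminf (Eventually.of_forall hb)
    _ = _ := liminf_const _

end Final

/-- For a sequence `(F_n)` in the finitely generated Wiener chaos of degree `m`
converging in law to `N(0,1)`, all negative moments of the carré du champ are asymptotically
bounded. -/
theorem negative_moments_of_chaos_clt (m : ℕ) (K : ℕ → ℕ)
    (P : (n : ℕ) → MvPolynomial (Fin (K n)) ℝ)
    (hchaos : ∀ n, P n ∈ chaos (K n) m)
    (hlaw : TendstoInLaw
      (fun n => Measure.map (fun x => eval x (P n)) (gaussPi (Fin (K n))))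
      (gaussianReal 0 1)) :
    ∀ q : ℕ,
      Filter.limsup
        (fun n => ∫⁻ x, (ENNReal.ofReal (sqField (P n) x) ^ q)⁻¹ ∂gaussPi (Fin (K n)))
        atTop < ⊤ := by
  intro q
  have hE : ∀ n, Eig m (P n) := fun n => Eig_of_chaos (hchaos n)
  have hmeas : ∀ n, AEMeasurable (fun x => eval x (P n)) (gaussPi (Fin (K n))) :=
    fun n => (continuous_evalP (P n)).measurable.aemeasurable
  set μs : ℕ → Measure ℝ := fun n => Measure.map (fun x => eval x (P n)) (gaussPi (Fin (K n))) with hμs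
  haveI : ∀ n, IsProbabilityMeasure (μs n) := fun n => Measure.isProbabilityMeasure_map (hmeas n)
  have hintg : ∀ n j, ∫ y, y ^ j ∂(μs n) = EE (P n ^ j) := by
    intro n j
    rw [hμs]; simp only
    rw [integral_map (hmeas n) (by fun_prop)]
    simp [EE]
  have hI : ∀ n j, Integrable (fun y : ℝ => y ^ j) (μs n) := by
    intro n j
    rw [hμs]; simp only
    rw [integrable_map_measure (by fun_prop) (hmeas n)]
    have := integrable_evalP (P n ^ j)
    simpa [Function.comp_def] using this
  have hH1 := hc_nonneg m
  have hH2 := hc_nonneg (2 * m)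
  have hm2 := mom_conv μs hlaw hI (hc m + hc (2 * m) + 1) (by linarith) (fun n => by
      rw [hintg, hintg]
      refine (hyper m (P n) (hE n).1).trans (mul_le_mul_of_nonneg_right (by linarith) (sq_nonneg _)))
    (fun n => by
      rw [hintg, hintg]
      have h := hyper (2 * m) (P n ^ 2) ((totalDegree_pow _ _).trans
        (Nat.mul_le_mul_left 2 (hE n).1))
      rw [← pow_mul, ← pow_mul] at h
      exact h.trans (mul_le_mul_of_nonneg_right (by linarith) (sq_nonneg _)))
  simp only [hintg] at hm2
  obtain ⟨t2, t4⟩ := hm2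
  rcases Nat.eq_zero_or_pos m with hm | hm
  · exfalso
    have e : ∀ n, EE (P n ^ 4) = EE (P n ^ 2) ^ 2 := by
      intro n
      have h := (hE n).1
      rw [hm] at h
      rw [totalDegree_eq_zero_iff_eq_C.mp (Nat.le_zero.mp h), ← map_pow, ← map_pow, EE_C, EE_C]
      ring
    simp only [e] at t4
    have := tendsto_nhds_unique t4 (t2.pow 2)
    norm_num at this
  obtain ⟨d, rfl⟩ : ∃ d, m = d + 1 := ⟨m - 1, by omega⟩
  set k : ℕ := d + 1 with hk
  have hk0 : (0 : ℝ) < k := by positivity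
  obtain ⟨δ, hδ, M, hM⟩ := NM_all d k hk0 q
  have hvar : ∀ n, EE ((Gam (P n) (P n) - C (k : ℝ)) ^ 2) ≤
      (k : ℝ) ^ 2 / 3 * EE (P n ^ 4) - 2 * k * (k * EE (P n ^ 2)) + k ^ 2 := by
    intro n
    have e : (Gam (P n) (P n) - C (k : ℝ)) ^ 2 =
        Gam (P n) (P n) ^ 2 - C (2 * (k : ℝ)) * Gam (P n) (P n) + C ((k : ℝ) ^ 2) := by
      simp only [map_mul, map_pow, map_ofNat]; ring
    rw [e, EE_add, EE_sub, EE_C, EE_C_mul, (hE n).Gam_eq]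
    have := (hE n).fourth
    linarith
  have tv : Tendsto (fun n => (k : ℝ) ^ 2 / 3 * EE (P n ^ 4) - 2 * k * (k * EE (P n ^ 2)) + k ^ 2) atTop
      (𝓝 ((k : ℝ) ^ 2 / 3 * 3 - 2 * k * (k * 1) + k ^ 2)) :=
    ((t4.const_mul _).sub ((t2.const_mul _).const_mul _)).add_const _
  have hev := tv.eventually_lt_const (u := δ) (by
    have : (k : ℝ) ^ 2 / 3 * 3 - 2 * k * (k * 1) + k ^ 2 = 0 := by ring
    rw [this]; exact hδ)
  have hfin : ∀ᶠ n in atTop,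
      ∫⁻ x, (ENNReal.ofReal (sqField (P n) x) ^ q)⁻¹ ∂gaussPi (Fin (K n)) ≤ ENNReal.ofReal M := by
    filter_upwards [hev] with n hn
    exact inv_moment_le (P n) q M (hM _ (P n) (hE n) ((hvar n).trans hn.le))
  exact (limsup_le_of_le (h := hfin)).trans_lt ENNReal.ofReal_lt_top
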